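/- arXiv:math/9808093 — 2 statements merged into one kernel-verified Lean document; each statement's English description precedes it below -/
import Mathlib

section
/- For every coanalytic set A ⊆ 2^ℕ there is a real z ∈ 2^ℕ and a program p such that for every x ∈ 2^ℕ the oracle computation φ_p^z(x) halts with output ⟨1,0,0,...⟩ if x ∈ A and output ⟨0,0,0,...⟩ if x ∉ A; the same conclusion holds for every analytic set A ⊆ 2^ℕ. -/
open scoped Classical

namespace ITTM

/-- A real is an element of Cantor space. -/
abbrev R := ℕ → Bool

/-- The constant-zero real. -/
def zeroR : R := fun _ => false

/-- The real ⟨1,0,0,...⟩ coding the answer "Yes". -/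
def oneR : R := fun n => decide (n = 0)

/-- The real coding a natural number `p`: `p` ones followed by zeros. -/
def natR (p : ℕ) : R := fun n => decide (n < p)

/-- The real coding the pair of reals `(y, z)`. -/
def pairR (y z : R) : R := fun n => if n % 2 = 0 then y (n / 2) else z (n / 2)

/-- A snapshot of an infinite time Turing machine computation with state set
`Fin (Q+1)`: the current state, the head position, and the contents of the
three tapes (tape 0 is the input tape, tape 1 the scratch tape, tape 2 the
output tape); cells hold values in `Bool` (`true` = 1, `false` = 0). -/
structure Snapshot (Q : ℕ) where
  state : Fin (Q + 1)
  head : ℕ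
  tape : Fin 3 → ℕ → Bool

/-- An infinite time Turing machine program: a finite set of states
`Fin (Q+1)` with distinguished start, limit and halt states, and a finite
transition table which, given the current state and the three cell values
read by the head, specifies the next state, the three values to write, and
the direction to move (`true` = right, `false` = left). -/
structure Machine where
  Q : ℕ
  start : Fin (Q + 1)
  limit : Fin (Q + 1)
  halt : Fin (Q + 1)
  trans : Fin (Q + 1) × (Fin 3 → Bool) → Fin (Q + 1) × (Fin 3 → Bool) × Bool

instance : Inhabited Machine := ⟨⟨0, 0, 0, 0, fun _ => (0, fun _ => false, true)⟩⟩

namespace Machine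

/-- The initial snapshot on input `x`: head on cell 0 in the start state, `x`
on the input tape, the other tapes filled with zeros. -/
def init (M : Machine) (x : R) : Snapshot M.Q where
  state := M.start
  head := 0
  tape := fun i n => if i = 0 then x n else false

/-- One step of computation applied to a snapshot. -/
def stepSnap (M : Machine) (s : Snapshot M.Q) : Snapshot M.Q :=
  let t := M.trans (s.state, fun i => s.tape i s.head)
  { state := t.1
    head := if t.2.2 then s.head + 1 else s.head - 1
    tape := fun i n => if n = s.head then t.2.1 i else s.tape i n }

/-- The snapshot of the computation of machine `M` on input `x` at ordinal
stage `α`, defined by transfinite recursion: at stage 0 the initial snapshot,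
at successor stages the transition table is applied, and at limit stages the
head is on cell 0 in the limit state and each cell holds the `limsup` of its
earlier values (1 iff its value was 1 cofinally often below the limit). -/
noncomputable def snap (M : Machine) (x : R) : Ordinal.{0} → Snapshot M.Q :=
  WellFounded.fix Ordinal.lt_wf fun α ih =>
    if _h0 : α = 0 then M.init x
    else if hs : ∃ β, β < α ∧ α = β + 1 then
      M.stepSnap (ih hs.choose hs.choose_spec.1)
    else
      { state := M.limit
        head := 0
        tape := fun i n =>
          decide (∀ β < α, ∃ γ, β ≤ γ ∧ ∃ hγ : γ < α, (ih γ hγ).tape i n = true) }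

/-- The machine is in the halt state at stage `α`. -/
def haltedAt (M : Machine) (x : R) (α : Ordinal) : Prop :=
  (M.snap x α).state = M.halt

/-- The computation of `M` on input `x` halts exactly at stage `α`: stage `α`
is the first stage at which the machine is in the halt state. -/
def haltsAt (M : Machine) (x : R) (α : Ordinal) : Prop :=
  M.haltedAt x α ∧ ∀ β < α, ¬ M.haltedAt x β

/-- The computation of `M` on input `x` halts. -/
def halts (M : Machine) (x : R) : Prop := ∃ α, M.haltedAt x α

/-- The computation of `M` on input `x` halts with output `y`: at the first
stage at which the machine is in the halt state, the output tape reads `y`. -/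
def outputs (M : Machine) (x y : R) : Prop :=
  ∃ α, M.haltsAt x α ∧ (M.snap x α).tape 2 = y

end Machine

/-- Machines are coded by natural numbers. -/
noncomputable instance : Encodable Machine :=
  Encodable.ofEquiv
    (Σ Q : ℕ, (Fin (Q + 1) × Fin (Q + 1) × Fin (Q + 1)) ×
      ((Fin (Q + 1) × (Fin 3 → Bool)) → Fin (Q + 1) × (Fin 3 → Bool) × Bool))
    { toFun := fun M => ⟨M.Q, (M.start, M.limit, M.halt), M.trans⟩
      invFun := fun s => ⟨s.1, s.2.1.1, s.2.1.2.1, s.2.1.2.2, s.2.2⟩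
      left_inv := fun _ => rfl
      right_inv := fun _ => rfl }

/-- The machine coded by the natural number `p`; every natural number codes a
machine, and every machine is coded by some natural number. -/
noncomputable def prog (p : ℕ) : Machine :=
  ((Encodable.decode p : Option Machine)).getD default

/-- `φ_p(x)` halts with output `y`. -/
noncomputable def phiOutputs (p : ℕ) (x y : R) : Prop := (prog p).outputs x y

/-- A set of reals is infinite time decidable when some machine, on any input
`x`, halts with output ⟨1,0,0,...⟩ if `x ∈ A` and output ⟨0,0,0,...⟩ if
`x ∉ A`. -/
def ITTMDecidable (A : Set R) : Prop :=
  ∃ M : Machine, ∀ x : R, (x ∈ A → M.outputs x oneR) ∧ (x ∉ A → M.outputs x zeroR)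

/-- A set of reals is infinite time semi-decidable when it is the halting set
of some machine. -/
def ITTMSemiDecidable (A : Set R) : Prop :=
  ∃ M : Machine, A = {x : R | M.halts x}

/-- The binary relation on ℕ coded by the real `x`:
`n ◁ k ⟺ x(⟨n,k⟩) = 1` where `⟨·,·⟩` is the pairing function. -/
def rel (x : R) (n k : ℕ) : Prop := x (Nat.pair n k) = true

/-- The field of the relation coded by `x`. -/
def field (x : R) : Set ℕ := {n | ∃ k, rel x n k ∨ rel x k n}

/-- The relation coded by `x`, restricted to its field. -/
def relOn (x : R) : field x → field x → Prop := fun a b => rel x a.1 b.1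

/-- The real `x` codes a well-order of (a subset of) ℕ, namely its field. -/
def codesWellOrder (x : R) : Prop := IsWellOrder (field x) (relOn x)

/-- The set of reals coding well-orders. -/
def WO : Set R := {x | codesWellOrder x}

/-- The real `x` codes a well-order of order type `α`. -/
def codesOrdinal (x : R) (α : Ordinal) : Prop :=
  ∃ h : codesWellOrder x, @Ordinal.type _ (relOn x) h = α

/-- An ordinal is clockable when some machine on input 0 halts exactly at
stage `α`. -/
def Clockable (α : Ordinal) : Prop := ∃ M : Machine, M.haltsAt zeroR α

/-- A real is writable when it is the output of some machine on input 0. -/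
def WritableReal (x : R) : Prop := ∃ M : Machine, M.outputs zeroR x

/-- An ordinal is writable when some writable real codes a well-order of that
order type. -/
def WritableOrdinal (α : Ordinal) : Prop :=
  ∃ x : R, WritableReal x ∧ codesOrdinal x α

/-- A real is eventually writable when some machine on input 0 never halts,
but from some stage onward the content of its output tape is exactly `x`. -/
def EventuallyWritableReal (x : R) : Prop :=
  ∃ M : Machine, ¬ M.halts zeroR ∧ ∃ α : Ordinal, ∀ β ≥ α, (M.snap zeroR β).tape 2 = x

/-- An ordinal is eventually writable when some eventually writable real codes
a well-order of that order type. -/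
def EventuallyWritableOrdinal (α : Ordinal) : Prop :=
  ∃ x : R, EventuallyWritableReal x ∧ codesOrdinal x α

/-- A snapshot of an oracle computation: as before, but with a fourth
(read-only) oracle tape, tape 3. -/
structure OSnapshot (Q : ℕ) where
  state : Fin (Q + 1)
  head : ℕ
  tape : Fin 4 → ℕ → Bool

/-- An infinite time Turing machine program with an oracle tape: the head also
reads the oracle tape cell, but can write only on tapes 0, 1, 2. -/
structure OMachine where
  Q : ℕ
  start : Fin (Q + 1)
  limit : Fin (Q + 1)
  halt : Fin (Q + 1)
  trans : Fin (Q + 1) × (Fin 4 → Bool) → Fin (Q + 1) × (Fin 3 → Bool) × Bool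

namespace OMachine

/-- The initial snapshot with oracle `y` and input `x`. -/
def init (M : OMachine) (y x : R) : OSnapshot M.Q where
  state := M.start
  head := 0
  tape := fun i n => if i = 0 then x n else if i = 3 then y n else false

/-- One step of oracle computation: the oracle tape is read-only. -/
def stepSnap (M : OMachine) (s : OSnapshot M.Q) : OSnapshot M.Q :=
  let t := M.trans (s.state, fun i => s.tape i s.head)
  { state := t.1
    head := if t.2.2 then s.head + 1 else s.head - 1
    tape := fun i n =>
      if h : (i : ℕ) < 3 then
        (if n = s.head then t.2.1 ⟨i, h⟩ else s.tape i n)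
      else s.tape i n }

/-- The snapshot of the computation of oracle machine `M` with oracle `y` on
input `x` at ordinal stage `α` (limit stages via `limsup`, as before; the
oracle tape never changes). -/
noncomputable def snap (M : OMachine) (y x : R) : Ordinal.{0} → OSnapshot M.Q :=
  WellFounded.fix Ordinal.lt_wf fun α ih =>
    if _h0 : α = 0 then M.init y x
    else if hs : ∃ β, β < α ∧ α = β + 1 then
      M.stepSnap (ih hs.choose hs.choose_spec.1)
    else
      { state := M.limit
        head := 0
        tape := fun i n =>
          decide (∀ β < α, ∃ γ, β ≤ γ ∧ ∃ hγ : γ < α, (ih γ hγ).tape i n = true) }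

/-- The oracle machine is in the halt state at stage `α`. -/
def haltedAt (M : OMachine) (y x : R) (α : Ordinal) : Prop :=
  (M.snap y x α).state = M.halt

/-- The oracle computation halts exactly at stage `α`. -/
def haltsAt (M : OMachine) (y x : R) (α : Ordinal) : Prop :=
  M.haltedAt y x α ∧ ∀ β < α, ¬ M.haltedAt y x β

/-- The oracle computation `φ_M^y(x)` halts. -/
def halts (M : OMachine) (y x : R) : Prop := ∃ α, M.haltedAt y x α

/-- `φ_M^y(x)` halts with output `z`. -/
def outputs (M : OMachine) (y x z : R) : Prop :=
  ∃ α, M.haltsAt y x α ∧ (M.snap y x α).tape 2 = z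

end OMachine

end ITTM

namespace ITTM

namespace OMachine

variable (M : OMachine) (z x : R)

theorem snap_zero : M.snap z x 0 = M.init z x := by
  rw [snap, WellFounded.fix_eq]; simp

theorem snap_succ (α : Ordinal) : M.snap z x (α + 1) = M.stepSnap (M.snap z x α) := by
  have hs : ∃ β, β < α + 1 ∧ α + 1 = β + 1 := ⟨α, by simp, rfl⟩
  have hc : hs.choose = α := by
    have := hs.choose_spec.2
    simpa using this.symm
  rw [snap, WellFounded.fix_eq]
  simp only [dif_pos hs]
  rw [dif_neg (by simp)]
  change M.stepSnap (M.snap z x hs.choose) = _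
  rw [hc]; rfl

theorem snap_limit {α : Ordinal} (h0 : α ≠ 0) (hs : ∀ β < α, β + 1 < α) :
    M.snap z x α =
      { state := M.limit
        head := 0
        tape := fun i n =>
          decide (∀ β < α, ∃ γ, β ≤ γ ∧ γ < α ∧ (M.snap z x γ).tape i n = true) } := by
  have hs' : ¬ ∃ β, β < α ∧ α = β + 1 := fun ⟨β, hβ, h⟩ => (hs β hβ).ne h.symm
  rw [snap, WellFounded.fix_eq]
  rw [dif_neg h0, dif_neg hs']
  congr 1
  funext i n
  simp only [exists_prop]

end OMachine

end ITTM

namespace ITTM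

namespace TreeSearch

/-- States of the tree searching machine. -/
inductive St
  | start | limit | halt | clean | first | reject
  | scan (prev : Bool) | back | forth | del
  | next1 | next2 | next3
  | toParent | flash | unflash | unflash' | toTop
  | blockHead (d : Bool × Bool) | readA (d : Bool × Bool) | readB (d : Bool × Bool) (a : Bool)
  | toLeft (d : Bool × Bool) (s : Bool × Bool) | compare (d : Bool × Bool) (s : Bool × Bool)
  | toRight (d : Bool × Bool) | endLeft (d : Bool × Bool) | endRight (d : Bool × Bool)
  | endTop (d : Bool × Bool)
  deriving Fintype, DecidableEq

/-- Update of the comparison record `d = (seen, bad)` on reading the symbol `s`, the input bit `xb`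
and the stack bit `yb`. -/
def record (d s : Bool × Bool) (xb yb : Bool) : Bool × Bool :=
  (d.1 || (!s.1 && s.2), d.2 || (s.1 && xb != s.2) || (!d.1 && yb != (!s.1 && s.2)))

/-- The transition table. The arguments are the current state and the bits read on the input, oracle,
marker and stack tapes; the values are the next state, the bits written on the marker and stack
tapes, and the direction. The machine answers `w` when it finds an infinite branch. -/
def trans (w : Bool) : St → Bool → Bool → Bool → Bool → St × Bool × Bool × Bool
  | .start, _, _, _, y => (.start, true, y, true)
  | .limit, _, _, true, false => (.next1, true, true, true)
  | .limit, _, _, true, true => (.first, false, true, true)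
  | .limit, _, _, false, true => (.clean, false, false, true)
  | .limit, _, _, false, false => (.halt, false, w, true)
  | .halt, _, _, n, y => (.halt, n, y, true)
  | .clean, _, _, n, _ => (.clean, n, false, true)
  | .first, _, _, n, true => (.reject, n, false, false)
  | .first, _, _, n, false => (.scan false, n, false, true)
  | .reject, _, _, n, _ => (.halt, n, !w, true)
  | .scan true, _, _, _, true => (.back, false, true, false)
  | .scan _, _, _, n, y => (.scan y, n, y, true)
  | .back, _, _, true, y => (.back, true, y, false)
  | .back, _, _, false, y => (.forth, true, y, true)
  | .forth, _, _, true, y => (.forth, true, y, true)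
  | .forth, _, _, false, _ => (.del, true, false, false)
  | .del, _, _, n, _ => (.next1, n, false, true)
  | .next1, _, _, n, y => (.next2, n, y, true)
  | .next2, _, _, n, y => (.next3, n, y, true)
  | .next3, _, false, n, y => (.next1, n, y, true)
  | .next3, _, true, n, _ => (.toParent, n, true, false)
  | .toParent, _, _, n, false => (.toParent, n, false, false)
  | .toParent, _, _, n, true => (.flash, n, true, true)
  | .flash, _, _, n, _ => (.unflash, n, true, true)
  | .unflash, _, _, n, y => (.unflash', n, y, false)
  | .unflash', _, _, n, _ => (.toTop, n, false, true)
  | .toTop, _, _, n, false => (.toTop, n, false, true)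
  | .toTop, _, _, _, true => (.readA (false, false), false, true, true)
  | .blockHead d, _, false, n, y => (.readA d, n, y, true)
  | .blockHead d, _, true, _, y => (.endLeft d, false, y, false)
  | .readA d, _, a, n, y => (.readB d a, n, y, true)
  | .readB d a, _, b, _, y => (.toLeft d (a, b), false, y, false)
  | .toLeft d s, _, _, true, y => (.toLeft d s, true, y, false)
  | .toLeft d s, _, _, false, y => (.compare d s, true, y, false)
  | .compare d s, xb, _, _, y => (.toRight (record d s xb y), false, y, true)
  | .toRight d, _, _, true, y => (.toRight d, true, y, true)
  | .toRight d, _, _, false, y => (.blockHead d, true, y, true)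
  | .endLeft d, _, _, true, y => (.endLeft d, true, y, false)
  | .endLeft d, _, _, false, y => (.endRight d, true, y, true)
  | .endRight d, _, _, true, y => (.endRight d, true, y, true)
  | .endRight d, _, _, false, y => (.endTop d, true, y, false)
  | .endTop d, _, _, n, false => (.endTop d, n, false, false)
  | .endTop d, _, _, n, true => (.next1, n, d.1 && !d.2, true)

instance : Nonempty St := ⟨.start⟩

/-- Numbering of the states. -/
noncomputable def stEquiv : St ≃ Fin (Fintype.card St - 1 + 1) :=
  Fintype.equivFinOfCardEq (Nat.succ_pred_eq_of_pos Fintype.card_pos).symm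

/-- The tree searching machine, with marker tape `1` and stack tape `2`. -/
noncomputable def machine (w : Bool) : OMachine where
  Q := Fintype.card St - 1
  start := stEquiv .start
  limit := stEquiv .limit
  halt := stEquiv .halt
  trans := fun p =>
    let t := trans w (stEquiv.symm p.1) (p.2 0) (p.2 3) (p.2 1) (p.2 2)
    (stEquiv t.1, ![p.2 0, t.2.1, t.2.2.1], t.2.2.2)

/-- A configuration: state, head position, marker tape and stack tape. -/
@[ext]
structure Cfg where
  st : St
  hd : ℕ
  N : ℕ → Bool
  Y : ℕ → Bool

/-- The snapshot described by a configuration, oracle and input. -/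
noncomputable def Cfg.toSnap (w : Bool) (z x : R) (c : Cfg) : OSnapshot (machine w).Q where
  state := stEquiv c.st
  head := c.hd
  tape := fun i n => ![x n, c.N n, c.Y n, z n] i

/-- One step on configurations. -/
def step (w : Bool) (z x : R) (c : Cfg) : Cfg :=
  let t := trans w c.st (x c.hd) (z c.hd) (c.N c.hd) (c.Y c.hd)
  ⟨t.1, if t.2.2.2 then c.hd + 1 else c.hd - 1, Function.update c.N c.hd t.2.1,
    Function.update c.Y c.hd t.2.2.1⟩

variable {w : Bool} {z x : R}

theorem toSnap_injective : Function.Injective (Cfg.toSnap w z x) := by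
  intro c d h
  have h1 := congrArg OSnapshot.state h
  have h2 := congrArg OSnapshot.head h
  have h3 := congrArg OSnapshot.tape h
  ext n
  · exact stEquiv.injective h1
  · exact h2
  · simpa [Cfg.toSnap] using congrFun (congrFun h3 1) n
  · simpa [Cfg.toSnap] using congrFun (congrFun h3 2) n

theorem stepSnap_toSnap (c : Cfg) :
    (machine w).stepSnap (c.toSnap w z x) = (step w z x c).toSnap w z x := by
  have hb : (stEquiv.symm (c.toSnap w z x).state) = c.st := by simp [Cfg.toSnap]
  simp only [OMachine.stepSnap, machine, hb]
  simp only [Cfg.toSnap, step]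
  congr 1
  funext i n
  fin_cases i <;> by_cases h : n = c.hd <;> simp [h]

/-- `Reaches w z x VN VY c d`: from configuration `c` the computation arrives at `d`, without halting
before, and without ever changing marker cells outside `VN` or stack cells outside `VY`. -/
def Reaches (w : Bool) (z x : R) (VN VY : Set ℕ) (c d : Cfg) : Prop :=
  ∀ α, (machine w).snap z x α = c.toSnap w z x → ∃ β, α ≤ β ∧
    (machine w).snap z x β = d.toSnap w z x ∧ ∀ γ, α ≤ γ → γ ≤ β → ∃ e : Cfg,
      (machine w).snap z x γ = e.toSnap w z x ∧ (γ < β → e.st ≠ .halt) ∧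
      (∀ n ∉ VN, e.N n = c.N n) ∧ ∀ n ∉ VY, e.Y n = c.Y n

variable {VN VY : Set ℕ} {c d e : Cfg}

theorem Reaches.refl (c : Cfg) : Reaches w z x VN VY c c := fun α h =>
  ⟨α, le_rfl, h, fun γ h1 h2 => ⟨c, by rwa [le_antisymm h2 h1],
    fun h => absurd h1 h.not_ge, fun _ _ => rfl, fun _ _ => rfl⟩⟩

theorem Reaches.trans (h₁ : Reaches w z x VN VY c d) (h₂ : Reaches w z x VN VY d e) :
    Reaches w z x VN VY c e := by
  intro α hα
  obtain ⟨β, hαβ, hβ, H⟩ := h₁ α hα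
  obtain ⟨δ, hβδ, hδ, H'⟩ := h₂ β hβ
  refine ⟨δ, hαβ.trans hβδ, hδ, fun γ h1 h2 => ?_⟩
  rcases lt_or_ge γ β with h | h
  · obtain ⟨e', a, b, c', d'⟩ := H γ h1 h.le
    exact ⟨e', a, fun _ => b h, c', d'⟩
  · obtain ⟨e', a, b, c', d'⟩ := H' γ h h2
    obtain ⟨e'', a', -, c'', d''⟩ := H β hαβ le_rfl
    obtain rfl : d = e'' := toSnap_injective (hβ.symm.trans a')
    exact ⟨e', a, b, fun n hn => (c' n hn).trans (c'' n hn),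
      fun n hn => (d' n hn).trans (d'' n hn)⟩

theorem Reaches.mono {VN' VY' : Set ℕ} (h : Reaches w z x VN VY c d) (hN : VN ⊆ VN')
    (hY : VY ⊆ VY') : Reaches w z x VN' VY' c d := by
  intro α hα
  obtain ⟨β, hαβ, hβ, H⟩ := h α hα
  refine ⟨β, hαβ, hβ, fun γ h1 h2 => ?_⟩
  obtain ⟨e, a, b, c', d'⟩ := H γ h1 h2
  exact ⟨e, a, b, fun n hn => c' n fun h => hn (hN h), fun n hn => d' n fun h => hn (hY h)⟩

theorem Reaches.of_step (hs : step w z x c = d) (hc : c.st ≠ .halt)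
    (hN : ∀ n ∉ VN, d.N n = c.N n) (hY : ∀ n ∉ VY, d.Y n = c.Y n) :
    Reaches w z x VN VY c d := by
  intro α hα
  have hα' : (machine w).snap z x (α + 1) = d.toSnap w z x := by
    rw [OMachine.snap_succ, hα, stepSnap_toSnap, hs]
  refine ⟨α + 1, by simp, hα', fun γ h1 h2 => ?_⟩
  rcases h1.eq_or_lt with rfl | h
  · exact ⟨c, hα, fun _ => hc, fun _ _ => rfl, fun _ _ => rfl⟩
  · obtain rfl : γ = α + 1 := le_antisymm h2 (Order.add_one_le_of_lt h)
    exact ⟨d, hα', fun h => absurd h (lt_irrefl _), hN, hY⟩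

/-- A step followed by a run. -/
theorem Reaches.head (hs : step w z x c = d) (h : Reaches w z x VN VY d e) (hc : c.st ≠ .halt)
    (hN : ∀ n ∉ VN, d.N n = c.N n) (hY : ∀ n ∉ VY, d.Y n = c.Y n) :
    Reaches w z x VN VY c e :=
  (Reaches.of_step hs hc hN hY).trans h

/-- The head runs right through cells which keep the state and the tapes unchanged. -/
theorem Reaches.scan_right {s : St} {h h' : ℕ} {N Y : ℕ → Bool} (hh : h ≤ h') (hs : s ≠ .halt)
    (H : ∀ j, h ≤ j → j < h' → TreeSearch.trans w s (x j) (z j) (N j) (Y j) = (s, N j, Y j, true)) :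
    Reaches w z x VN VY ⟨s, h, N, Y⟩ ⟨s, h', N, Y⟩ := by
  induction h', hh using Nat.le_induction with
  | base => exact .refl _
  | succ k hk ih =>
    refine (ih fun j h1 h2 => H j h1 (h2.trans k.lt_succ_self)).trans ?_
    refine .of_step ?_ hs (fun _ _ => rfl) (fun _ _ => rfl)
    simp [step, H k hk k.lt_succ_self]

/-- The head runs left through cells which keep the state and the tapes unchanged. -/
theorem Reaches.scan_left {s : St} {h h' : ℕ} {N Y : ℕ → Bool} (hh : h ≤ h') (hs : s ≠ .halt)
    (H : ∀ j, h < j → j ≤ h' → TreeSearch.trans w s (x j) (z j) (N j) (Y j) = (s, N j, Y j, false)) :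
    Reaches w z x VN VY ⟨s, h', N, Y⟩ ⟨s, h, N, Y⟩ := by
  induction h', hh using Nat.le_induction with
  | base => exact .refl _
  | succ k hk ih =>
    refine .trans ?_ (ih fun j h1 h2 => H j h1 (h2.trans k.le_succ))
    refine .of_step ?_ hs (fun _ _ => rfl) (fun _ _ => rfl)
    simp [step, H (k + 1) (Nat.lt_succ_of_le hk) le_rfl]

/-- `LimitValue T V v n`: the values `T k n` at cell `n`, subject to changes only while `n ∈ V k`,
have limit superior `v`. -/
def LimitValue (T : ℕ → ℕ → Bool) (V : ℕ → Set ℕ) (v : Bool) (n : ℕ) : Prop :=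
  (v = true ∧ ∀ k, ∃ l ≥ k, T l n = true) ∨ ∃ k, T k n = v ∧ ∀ l ≥ k, n ∉ V l

theorem Reaches.limit {VN VY : ℕ → Set ℕ} {VN' VY' : Set ℕ} {c : ℕ → Cfg} {N Y : ℕ → Bool}
    (h : ∀ k, Reaches w z x (VN k) (VY k) (c k) (c (k + 1))) (hne : ∀ k, c k ≠ c (k + 1))
    (hVN : ∀ k, VN k ⊆ VN') (hVY : ∀ k, VY k ⊆ VY')
    (hN : ∀ n, LimitValue (fun k => (c k).N) VN (N n) n)
    (hY : ∀ n, LimitValue (fun k => (c k).Y) VY (Y n) n) :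
    Reaches w z x VN' VY' (c 0) ⟨.limit, 0, N, Y⟩ := by
  intro α hα
  choose! nx hle hnx hseg using h
  let t : ℕ → Ordinal := fun k => Nat.rec α (fun k a => nx k a) k
  have ht : ∀ k, (machine w).snap z x (t k) = (c k).toSnap w z x := by
    intro k
    induction k with
    | zero => exact hα
    | succ k ih => exact hnx k _ ih
  have hlt : ∀ k, t k < t (k + 1) := by
    intro k
    refine lt_of_le_of_ne (hle k _ (ht k)) fun h =>
      hne k (toSnap_injective (w := w) (z := z) (x := x) ?_)
    rw [← ht, ← ht, ← h]
  have hmono : StrictMono t := strictMono_nat_of_lt_succ hlt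
  have hseg' : ∀ k γ, t k ≤ γ → γ ≤ t (k + 1) → _ := fun k => hseg k (t k) (ht k)
  set β := ⨆ k, t k with hβ
  have htβ : ∀ k, t k < β := fun k => (hlt k).trans_le (Ordinal.le_iSup t (k + 1))
  have hex : ∀ γ < β, ∃ k, γ < t k := fun γ hγ => Ordinal.lt_iSup_iff.1 hγ
  have hloc : ∀ K γ, t K ≤ γ → γ < β → ∃ k ≥ K, t k ≤ γ ∧ γ < t (k + 1) := by
    intro K γ h1 h2
    obtain ⟨m, hm⟩ := hex γ h2
    induction m with
    | zero => exact absurd (hm.trans_le (hmono.monotone K.zero_le)) h1.not_gt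
    | succ m ih =>
      rcases lt_or_ge γ (t m) with h | h
      · exact ih h
      · exact ⟨m, Nat.lt_succ_iff.1 (hmono.lt_iff_lt.1 (h1.trans_lt hm)), h, hm⟩
  have hcfg : ∀ K γ, t K ≤ γ → γ < β → ∃ k ≥ K, ∃ e,
      (machine w).snap z x γ = Cfg.toSnap w z x e ∧
      e.st ≠ .halt ∧ (∀ n ∉ VN k, e.N n = (c k).N n) ∧ ∀ n ∉ VY k, e.Y n = (c k).Y n := by
    intro K γ h1 h2
    obtain ⟨k, hK, hk, hk'⟩ := hloc K γ h1 h2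
    obtain ⟨e, a, b, c', d'⟩ := hseg' k γ hk hk'.le
    exact ⟨k, hK, e, a, b hk', c', d'⟩
  have hstepN : ∀ k, ∀ n ∉ VN k, (c (k + 1)).N n = (c k).N n := by
    intro k n hn
    obtain ⟨e, a, -, c', -⟩ := hseg' k _ (hlt k).le le_rfl
    obtain rfl := toSnap_injective ((ht (k + 1)).symm.trans a)
    exact c' n hn
  have hstepY : ∀ k, ∀ n ∉ VY k, (c (k + 1)).Y n = (c k).Y n := by
    intro k n hn
    obtain ⟨e, a, -, -, c'⟩ := hseg' k _ (hlt k).le le_rfl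
    obtain rfl := toSnap_injective ((ht (k + 1)).symm.trans a)
    exact c' n hn
  have hsup : ∀ (T : ℕ → ℕ → Bool) (V : ℕ → Set ℕ) (i : Fin 4) (n : ℕ) (v : Bool),
      LimitValue T V v n → (∀ k, ∀ n ∉ V k, T (k + 1) n = T k n) →
      (∀ k, ((machine w).snap z x (t k)).tape i n = T k n) →
      (∀ K γ, t K ≤ γ → γ < β → ∃ k ≥ K,
        (n ∉ V k → ((machine w).snap z x γ).tape i n = T k n)) →
      decide (∀ δ < β, ∃ γ, δ ≤ γ ∧ γ < β ∧ ((machine w).snap z x γ).tape i n = true) = v := by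
    intro T V i n v hv hT hTk hγ
    rcases hv with ⟨rfl, hv⟩ | ⟨k, hk, hv⟩
    · rw [decide_eq_true_iff]
      intro δ hδ
      obtain ⟨k, hk⟩ := hex δ hδ
      obtain ⟨l, hl, hl'⟩ := hv k
      exact ⟨t l, hk.le.trans (hmono.monotone hl), htβ l, (hTk l).trans hl'⟩
    · have hconst : ∀ l ≥ k, T l n = v := fun l hl => by
        induction l, hl using Nat.le_induction with
        | base => exact hk
        | succ l hl ih => rw [hT l n (hv l hl), ih]
      have hall : ∀ γ, t k ≤ γ → γ < β → ((machine w).snap z x γ).tape i n = v := by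
        intro γ h1 h2
        obtain ⟨l, hl, hn⟩ := hγ k γ h1 h2
        rw [hn (hv l hl), hconst l hl]
      cases v
      · rw [decide_eq_false_iff_not]
        intro H
        obtain ⟨γ, h1, h2, h3⟩ := H (t k) (htβ k)
        rw [hall γ h1 h2] at h3
        exact absurd h3 (by simp)
      · rw [decide_eq_true_iff]
        intro δ hδ
        exact ⟨max δ (t k), le_max_left _ _, max_lt hδ (htβ k),
          hall _ (le_max_right _ _) (max_lt hδ (htβ k))⟩
  have hlim : ∀ δ < β, δ + 1 < β := fun δ hδ => by
    obtain ⟨k, hk⟩ := hex δ hδ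
    exact (Order.add_one_le_of_lt hk).trans_lt (htβ k)
  have hβ' : (machine w).snap z x β = Cfg.toSnap w z x ⟨.limit, 0, N, Y⟩ := by
    rw [OMachine.snap_limit _ _ _ (pos_of_gt (htβ 0)).ne' hlim]
    simp only [Cfg.toSnap]
    congr 1
    funext i n
    have hconst : ∀ v, (∀ e : Cfg, (e.toSnap w z x).tape i n = v) →
        decide (∀ δ < β, ∃ γ, δ ≤ γ ∧ γ < β ∧ ((machine w).snap z x γ).tape i n = true) = v := by
      intro v hv
      refine hsup (fun _ _ => v) (fun _ => ∅) i n v (.inr ⟨0, rfl, by simp⟩) (fun _ _ _ => rfl)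
        (fun k => by rw [ht, hv]) fun K γ h1 h2 => ?_
      obtain ⟨k, hk, e, he, -⟩ := hcfg K γ h1 h2
      exact ⟨k, hk, fun _ => by rw [he, hv]⟩
    match i with
    | 0 => exact hconst _ fun e => rfl
    | 1 =>
      refine hsup _ VN 1 n (N n) (hN n) hstepN (fun k => by rw [ht]; rfl) fun K γ h1 h2 => ?_
      obtain ⟨k, hk, e, he, -, h, -⟩ := hcfg K γ h1 h2
      exact ⟨k, hk, fun hn => by rw [he]; exact h n hn⟩
    | 2 =>
      refine hsup _ VY 2 n (Y n) (hY n) hstepY (fun k => by rw [ht]; rfl) fun K γ h1 h2 => ?_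
      obtain ⟨k, hk, e, he, -, -, h⟩ := hcfg K γ h1 h2
      exact ⟨k, hk, fun hn => by rw [he]; exact h n hn⟩
    | 3 => exact hconst _ fun e => rfl
  have hN0 : ∀ k, ∀ n ∉ VN', (c k).N n = (c 0).N n := fun k n hn => by
    induction k with
    | zero => rfl
    | succ k ih => rw [hstepN k n fun h => hn (hVN k h), ih]
  have hY0 : ∀ k, ∀ n ∉ VY', (c k).Y n = (c 0).Y n := fun k n hn => by
    induction k with
    | zero => rfl
    | succ k ih => rw [hstepY k n fun h => hn (hVY k h), ih]
  have hlv : ∀ (T : ℕ → ℕ → Bool) (V : ℕ → Set ℕ) v n, LimitValue T V v n →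
      (∀ k, T k n = T 0 n) → v = T 0 n := by
    rintro T V v n (⟨rfl, hv⟩ | ⟨k, rfl, -⟩) hT
    · obtain ⟨l, -, hl⟩ := hv 0
      rw [← hT l, hl]
    · exact hT k
  refine ⟨β, (htβ 0).le, hβ', fun γ h1 h2 => ?_⟩
  rcases h2.eq_or_lt with rfl | h2
  · exact ⟨_, hβ', fun h => absurd h (lt_irrefl _),
      fun n hn => hlv _ _ _ _ (hN n) fun k => hN0 k n hn,
      fun n hn => hlv _ _ _ _ (hY n) fun k => hY0 k n hn⟩
  · obtain ⟨k, -, e, he, hst, h, h'⟩ := hcfg 0 γ h1 h2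
    exact ⟨e, he, fun _ => hst, fun n hn => (h n fun h => hn (hVN k h)).trans (hN0 k n hn),
      fun n hn => (h' n fun h => hn (hVY k h)).trans (hY0 k n hn)⟩

end TreeSearch

end ITTM

namespace ITTM

namespace TreeSearch

/-- The node `v` of the searched tree sits at cell `3 * unit v`. -/
def unit : ℕ → ℕ
  | 0 => 0
  | v + 1 => 4 ^ v

/-- The tape cell of the node `v`. -/
def cell (v : ℕ) : ℕ := 3 * unit v

theorem unit_strictMono : StrictMono unit := by
  refine strictMono_nat_of_lt_succ fun v => ?_
  cases v with
  | zero => simp [unit]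
  | succ v => simp only [unit]; exact Nat.pow_lt_pow_right (by norm_num) v.lt_succ_self

theorem cell_zero : cell 0 = 0 := rfl

theorem cell_strictMono : StrictMono cell := fun _ _ h =>
  Nat.mul_lt_mul_of_pos_left (unit_strictMono h) (by norm_num)

theorem cell_add_three_le {u v : ℕ} (h : u < v) : cell u + 3 ≤ cell v := by
  have := unit_strictMono h
  simp only [cell]; omega

theorem cell_succ_succ (v : ℕ) : cell (v + 2) = cell (v + 1) + 3 * cell (v + 1) := by
  simp only [cell, unit, pow_succ]; omega

theorem le_cell (v : ℕ) : v ≤ cell v := cell_strictMono.id_le v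

/-- A tree on `ℕ` with root `0`, in which every node lies above its parent, together with
admissibility conditions for the nodes: a node `v` is admitted on input `x` if it is `good` and `x`
passes the test attached to `v`. -/
structure Tree where
  par : ℕ → ℕ
  good : ℕ → Prop
  test : ℕ → Option (ℕ × Bool)
  par_lt : ∀ v, 0 < v → par v < v
  test_lt : ∀ v k b, 0 < v → test v = some (k, b) → k < cell v
  test_ne : ∀ v k b, 0 < v → test v = some (k, b) → k ≠ cell (par v)

namespace Tree

variable (F : Tree)

/-- `v` is admitted on input `x`. -/
def Admits (x : R) (v : ℕ) : Prop := F.good v ∧ ∀ k b, F.test v = some (k, b) → x k = b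

/-- `v` is an admitted child of `u` on input `x`. -/
def Child (x : R) (v u : ℕ) : Prop := 0 < v ∧ F.par v = u ∧ F.Admits x v

/-- The symbol telling how to compare cell `j` with the requirements of node `v`: `(0,1)` marks
the parent, `(1,b)` requires the input bit `b`, and `(0,0)` requires nothing. -/
noncomputable def symbol (v j : ℕ) : Bool × Bool :=
  if F.good v then
    if j = cell (F.par v) then (false, true)
    else if F.test v = some (j, false) then (true, false)
    else if F.test v = some (j, true) then (true, true)
    else (false, false)
  else (false, false)

/-- The oracle listing the symbols of all nodes. The block of node `v` starts at `cell v`. -/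
noncomputable def oracle : R := fun n =>
  let i := Nat.log 4 (n / 3)
  let s := F.symbol (i + 1) (cell (i + 1) - 1 - (n / 3 - 4 ^ i))
  if n % 3 = 0 then decide (∃ v, n = cell (v + 1)) else if n % 3 = 1 then s.1 else s.2

theorem oracle_cell {v : ℕ} (hv : 0 < v) : F.oracle (cell v) = true := by
  obtain ⟨v, rfl⟩ : ∃ m, v = m + 1 := ⟨v - 1, by omega⟩
  have : cell (v + 1) % 3 = 0 := by simp [cell]
  simp only [oracle, this, if_true, decide_eq_true_iff]
  exact ⟨v, rfl⟩

theorem oracle_between {v n : ℕ} (h1 : cell v < 3 * n) (h2 : 3 * n < cell (v + 1)) :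
    F.oracle (3 * n) = false := by
  have h3 : 3 * n % 3 = 0 := by omega
  simp only [oracle, h3, if_true, decide_eq_false_iff_not]
  rintro ⟨u, hu⟩
  rw [hu] at h1 h2
  have h1 := cell_strictMono.lt_iff_lt.1 h1
  have h2 := cell_strictMono.lt_iff_lt.1 h2
  omega

theorem oracle_symbol {v o : ℕ} (hv : 0 < v) (ho : o < cell v) :
    (F.oracle (cell v + 3 * o + 1), F.oracle (cell v + 3 * o + 2)) =
      F.symbol v (cell v - 1 - o) := by
  obtain ⟨v, rfl⟩ : ∃ m, v = m + 1 := ⟨v - 1, by omega⟩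
  have hc : cell (v + 1) = 3 * 4 ^ v := rfl
  have h1 : (cell (v + 1) + 3 * o + 1) / 3 = 4 ^ v + o := by omega
  have h2 : (cell (v + 1) + 3 * o + 2) / 3 = 4 ^ v + o := by omega
  have h3 : (cell (v + 1) + 3 * o + 1) % 3 = 1 := by omega
  have h4 : (cell (v + 1) + 3 * o + 2) % 3 = 2 := by omega
  have h5 : Nat.log 4 (4 ^ v + o) = v := by
    rw [Nat.log_eq_iff (Or.inr ⟨by norm_num, by positivity⟩)]
    rw [pow_succ]; omega
  simp [oracle, h1, h2, h3, h4, h5]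

end Tree

/-- The stack tape `Y` holds a branch with last node `u`. -/
structure Stack (Y : ℕ → Bool) (u : ℕ) : Prop where
  root : Y 0 = true
  top : Y (cell u) = true
  above : ∀ n, cell u < n → Y n = false
  dvd : ∀ n, Y n = true → 3 ∣ n

theorem Stack.push {Y : ℕ → Bool} {u v : ℕ} (h : Stack Y u) (huv : u < v) :
    Stack (Function.update Y (cell v) true) v := by
  have hc := cell_strictMono huv
  refine ⟨?_, by simp, fun n hn => ?_, fun n hn => ?_⟩
  · rw [Function.update_of_ne (by omega), h.root]
  · rw [Function.update_of_ne (by omega), h.above n (by omega)]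
  · rcases eq_or_ne n (cell v) with rfl | hn'
    · exact Dvd.intro _ rfl
    · rw [Function.update_of_ne hn'] at hn
      exact h.dvd n hn

/-- The blank marker tape. -/
def blank : ℕ → Bool := fun _ => true

/-- The marker tape with a marker at `j`. -/
def mark (j : ℕ) : ℕ → Bool := Function.update blank j false

variable {w : Bool} {z x : R} {F : Tree} {N Y : ℕ → Bool} {u v : ℕ}

theorem reaches_next_of_units {a b : ℕ} (hab : a < b)
    (H : ∀ j, a < j → j < b → z (3 * j) = false) :
    Reaches w z x ∅ ∅ ⟨.next1, 3 * a + 1, N, Y⟩ ⟨.next3, 3 * b, N, Y⟩ := by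
  induction b, hab using Nat.le_induction with
  | base =>
    refine .head (d := ⟨.next2, 3 * a + 2, N, Y⟩) (by simp [step, trans]) ?_ (by simp) (by simp)
      (by simp)
    exact .of_step (by simp [step, trans]; ring) (by simp) (by simp) (by simp)
  | succ b hb ih =>
    refine (ih fun j h1 h2 => H j h1 (by omega)).trans ?_
    refine .head (d := ⟨.next1, 3 * b + 1, N, Y⟩) (by simp [step, trans, H b hb]) ?_ (by simp)
      (by simp) (by simp)
    refine .head (d := ⟨.next2, 3 * b + 2, N, Y⟩) (by simp [step, trans]) ?_ (by simp) (by simp)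
      (by simp)
    exact .of_step (by simp [step, trans]; ring) (by simp) (by simp) (by simp)

theorem reaches_next (v : ℕ) :
    Reaches w F.oracle x ∅ ∅ ⟨.next1, cell v + 1, N, Y⟩ ⟨.next3, cell (v + 1), N, Y⟩ := by
  refine reaches_next_of_units (unit_strictMono v.lt_succ_self) fun j h1 h2 => ?_
  exact F.oracle_between (v := v) (by simp only [cell]; omega) (by simp only [cell]; omega)

/-- The stack tape while the parent `u` of the candidate `v` is flashing. -/
def flashing (Y : ℕ → Bool) (u v : ℕ) : ℕ → Bool :=
  Function.update (Function.update Y (cell v) true) (cell u + 1) true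

theorem reaches_flash (hY : Stack Y u) (huv : u < v) :
    Reaches w F.oracle x ∅ {cell v, cell u + 1} ⟨.next3, cell v, N, Y⟩
      ⟨.unflash, cell u + 2, N, flashing Y u v⟩ := by
  have hc := cell_add_three_le huv
  set Y' := Function.update Y (cell v) true with hY'
  have h1 : ∀ n, cell u < n → n ≤ cell v - 1 → Y' n = false := fun n h1 h2 => by
    rw [hY', Function.update_of_ne (by omega), hY.above n h1]
  have h2 : Y' (cell u) = true := by
    rw [hY', Function.update_of_ne (by omega), hY.top]
  refine .head (d := ⟨.toParent, cell v - 1, N, Y'⟩)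
    (by simp [step, trans, F.oracle_cell (by omega : 0 < v), hY']) ?_ (by simp) (by simp) ?_
  · refine .trans (.scan_left (h := cell u) (by omega) (by simp)
      fun j hj hj' => by simp [trans, h1 j hj hj']) ?_
    refine .head (d := ⟨.flash, cell u + 1, N, Y'⟩) ?_ ?_ (by simp) (by simp) (by simp)
    · simp [step, trans, h2]
    · refine .of_step (by simp [step, trans, flashing, hY']) (by simp) (by simp) ?_
      intro n hn
      simp at hn
      simp [flashing, hY', hn]
  · intro n hn
    simp at hn
    simp [hY', hn]

theorem update_mark {i j : ℕ} (hij : i ≠ j) :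
    Function.update (Function.update (mark i) j false) i true = mark j := by
  funext n
  simp only [mark, blank, Function.update_apply]
  split_ifs <;> simp_all

theorem reaches_compare {k j : ℕ} {d : Bool × Bool} (hj : j + 1 ≤ k) :
    Reaches w z x Set.univ ∅ ⟨.readA d, k + 1, mark (j + 1), Y⟩
      ⟨.blockHead (record d (z (k + 1), z (k + 2)) (x j) (Y j)), k + 3, mark j, Y⟩ := by
  refine .head (d := ⟨.readB d (z (k + 1)), k + 2, mark (j + 1), Y⟩) (by simp [step, trans]) ?_
    (by simp) (by simp) (by simp)
  refine .head (d := ⟨.toLeft d (z (k + 1), z (k + 2)), k + 1,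
    Function.update (mark (j + 1)) (k + 2) false, Y⟩) (by simp [step, trans]) ?_
    (by simp) (by simp) (by simp)
  refine .trans (.scan_left (h := j + 1) (by omega) (by simp) fun i h1 h2 => ?_) ?_
  · have : Function.update (mark (j + 1)) (k + 2) false i = true := by
      rw [Function.update_of_ne (by omega), mark, Function.update_of_ne (by omega), blank]
    rw [this]; simp [trans]
  refine .head (d := ⟨.compare d (z (k + 1), z (k + 2)), j, mark (k + 2), Y⟩) ?_ ?_
    (by simp) (by simp) (by simp)
  · have : Function.update (mark (j + 1)) (k + 2) false (j + 1) = false := by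
      rw [Function.update_of_ne (by omega), mark, Function.update_self]
    simp only [step, this, trans]
    simp [update_mark (show j + 1 ≠ k + 2 by omega)]
  refine .head (d := ⟨.toRight (record d (z (k + 1), z (k + 2)) (x j) (Y j)), j + 1,
    Function.update (mark (k + 2)) j false, Y⟩) (by simp [step, trans]) ?_
    (by simp) (by simp) (by simp)
  refine .trans (.scan_right (h' := k + 2) (by omega) (by simp) fun i h1 h2 => ?_) ?_
  · have : Function.update (mark (k + 2)) j false i = true := by
      rw [Function.update_of_ne (by omega), mark, Function.update_of_ne (by omega), blank]
    rw [this]; simp [trans]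
  refine .of_step ?_ (by simp) (by simp) (by simp)
  have : Function.update (mark (k + 2)) j false (k + 2) = false := by
    rw [Function.update_of_ne (by omega), mark, Function.update_self]
  simp only [step, this, trans]
  simp [update_mark (show k + 2 ≠ j by omega)]

/-- The comparison record after `o` comparisons for the node `v`. -/
noncomputable def records (F : Tree) (x : R) (Y : ℕ → Bool) (v : ℕ) : ℕ → Bool × Bool
  | 0 => (false, false)
  | o + 1 => record (records F x Y v o) (F.symbol v (cell v - 1 - o)) (x (cell v - 1 - o))
      (Y (cell v - 1 - o))

theorem reaches_records (hv : 0 < v) {o : ℕ} (ho : o < cell v) :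
    Reaches w F.oracle x Set.univ ∅ ⟨.readA (false, false), cell v + 1, mark (cell v), Y⟩
      ⟨.blockHead (records F x Y v (o + 1)), cell v + 3 * o + 3, mark (cell v - 1 - o), Y⟩ := by
  induction o with
  | zero =>
    have h := reaches_compare (w := w) (z := F.oracle) (x := x) (Y := Y) (k := cell v)
      (j := cell v - 1) (d := (false, false)) (by omega)
    rw [show cell v - 1 + 1 = cell v by omega] at h
    have hs := F.oracle_symbol hv ho
    simp only [mul_zero, add_zero] at hs
    rw [hs] at h
    exact h
  | succ o ih =>
    refine (ih (by omega)).trans ?_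
    have h := reaches_compare (w := w) (z := F.oracle) (x := x) (Y := Y)
      (k := cell v + 3 * (o + 1)) (j := cell v - 1 - (o + 1)) (d := records F x Y v (o + 1))
      (by omega)
    rw [F.oracle_symbol hv ho, show cell v - 1 - (o + 1) + 1 = cell v - 1 - o by omega] at h
    refine .head ?_ h (by simp) (by simp) (by simp)
    have hz : F.oracle (cell v + 3 * o + 3) = false := by
      have : cell v + 3 * o + 3 = 3 * (unit v + o + 1) := by simp only [cell]; ring
      rw [this]
      obtain ⟨v, rfl⟩ : ∃ m, v = m + 1 := ⟨v - 1, by omega⟩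
      have h2 : cell (v + 1 + 1) = _ := cell_succ_succ v
      refine F.oracle_between (v := v + 1) ?_ ?_ <;> simp only [cell] at * <;> omega
    simp [step, trans, hz]
    ring

theorem records_fst (o : ℕ) : (records F x Y v o).1 = true ↔
    ∃ i < o, F.symbol v (cell v - 1 - i) = (false, true) := by
  induction o with
  | zero => simp [records]
  | succ o ih =>
    simp only [records, record, Bool.or_eq_true, ih, Nat.exists_lt_succ_right, Prod.ext_iff]
    simp

theorem records_snd (o : ℕ) : (records F x Y v o).2 = true ↔
    ∃ i < o, ((F.symbol v (cell v - 1 - i)).1 = true ∧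
        x (cell v - 1 - i) ≠ (F.symbol v (cell v - 1 - i)).2) ∨
      ((∀ i' < i, F.symbol v (cell v - 1 - i') ≠ (false, true)) ∧
        Y (cell v - 1 - i) ≠ decide (F.symbol v (cell v - 1 - i) = (false, true))) := by
  induction o with
  | zero => simp [records]
  | succ o ih =>
    have h1 := records_fst (F := F) (x := x) (Y := Y) (v := v) o
    have h2 : (records F x Y v o).1 = false ↔
        ∀ i' < o, F.symbol v (cell v - 1 - i') ≠ (false, true) := by
      rw [← Bool.not_eq_true, h1]; push Not; rfl
    rw [Nat.exists_lt_succ_right, ← ih, ← h2]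
    simp only [records, record]
    rcases hs : F.symbol v (cell v - 1 - o) with ⟨a, b⟩
    cases a <;> cases b <;> simp [or_assoc]

theorem Tree.symbol_eq_parent {j : ℕ} :
    F.symbol v j = (false, true) ↔ F.good v ∧ j = cell (F.par v) := by
  unfold symbol; split_ifs <;> simp_all

theorem Tree.symbol_eq_test {j : ℕ} {b : Bool} (h : F.good v) (hv : 0 < v)
    (ht : F.test v = some (j, b)) : F.symbol v j = (true, b) := by
  have := F.test_ne v j b hv ht
  unfold symbol; split_ifs <;> cases b <;> simp_all

theorem Tree.test_of_symbol {j : ℕ} (h : (F.symbol v j).1 = true) :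
    F.test v = some (j, (F.symbol v j).2) := by
  unfold symbol at *; split_ifs at * <;> simp_all

theorem records_cell {Y' : ℕ → Bool} (hY : Stack Y u) (huv : u < v)
    (hY' : ∀ j < cell v, Y' j = Y j) :
    ((records F x Y' v (cell v)).1 && !(records F x Y' v (cell v)).2) =
      decide (F.Child x v u) := by
  have hv : 0 < v := by omega
  have hpv := cell_strictMono (F.par_lt v hv)
  have huc := cell_strictMono huv
  rw [Bool.eq_iff_iff, Bool.and_eq_true, Bool.not_eq_true', ← Bool.not_eq_true, records_fst,
    records_snd, decide_eq_true_iff]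
  simp only [Tree.symbol_eq_parent]
  constructor
  · rintro ⟨⟨i, hi, hg, -⟩, H⟩
    push Not at H
    refine ⟨hv, ?_, hg, fun k b hk => ?_⟩
    · have h1 : Y (cell (F.par v)) = true := by
        have := (H (cell v - 1 - cell (F.par v)) (by omega)).2 fun i' _ h => by
          have := (Tree.symbol_eq_parent.1 h).2; omega
        rw [show cell v - 1 - (cell v - 1 - cell (F.par v)) = cell (F.par v) by omega] at this
        rw [← hY' _ hpv, this]
        simp [hg]
      rcases lt_trichotomy (F.par v) u with h | h | h
      · have hc := cell_strictMono h
        have := (H (cell v - 1 - cell u) (by omega)).2 fun i' _ h => by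
          have := (Tree.symbol_eq_parent.1 h).2; omega
        rw [show cell v - 1 - (cell v - 1 - cell u) = cell u by omega, hY' _ huc, hY.top] at this
        simp at this
        omega
      · exact h
      · rw [hY.above _ (cell_strictMono h)] at h1
        simp at h1
    · have hk' := F.test_lt v k b hv hk
      have := (H (cell v - 1 - k) (by omega)).1
      rw [show cell v - 1 - (cell v - 1 - k) = k by omega, F.symbol_eq_test hg hv hk] at this
      exact this rfl
  · rintro ⟨-, rfl, hg, ht⟩
    refine ⟨⟨cell v - 1 - cell (F.par v), by omega, hg, by omega⟩, ?_⟩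
    rintro ⟨i, hi, ⟨h1, h2⟩ | ⟨h1, h2⟩⟩
    · exact h2 (ht _ _ (F.test_of_symbol h1))
    · rw [hY' _ (by omega)] at h2
      rcases lt_trichotomy (cell v - 1 - i) (cell (F.par v)) with h | h | h
      · exact h1 (cell v - 1 - cell (F.par v)) (by omega)
          (Tree.symbol_eq_parent.2 ⟨hg, by omega⟩)
      · rw [h, hY.top] at h2
        simp [hg] at h2
      · rw [hY.above _ h] at h2
        simp at h2
        omega

end TreeSearch

end ITTM

namespace ITTM

namespace TreeSearch

variable {w : Bool} {z x : R} {F : Tree} {N Y : ℕ → Bool} {u v : ℕ}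

/-- Back from the comparisons, the machine writes its verdict on the top cell. -/
theorem reaches_verdict {d : Bool × Bool} (hY : Y (cell v) = true)
    (hY' : ∀ n, cell v < n → Y n = false) :
    Reaches w F.oracle x Set.univ {cell v} ⟨.blockHead d, cell (v + 1), mark 0, Y⟩
      ⟨.next1, cell v + 1, blank, Function.update Y (cell v) (d.1 && !d.2)⟩ := by
  have hc := cell_add_three_le v.lt_succ_self
  set q := cell (v + 1) with hq
  refine .head (d := ⟨.endLeft d, q - 1, Function.update (mark 0) q false, Y⟩)
    (by simp [step, trans, hq, F.oracle_cell v.succ_pos]) ?_ (by simp) (by simp) (by simp)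
  refine .trans (.scan_left (h := 0) (by omega) (by simp) fun i h1 h2 => ?_) ?_
  · have : Function.update (mark 0) q false i = true := by
      rw [Function.update_of_ne (by omega), mark, Function.update_of_ne (by omega), blank]
    rw [this]; simp [trans]
  refine .head (d := ⟨.endRight d, 1, mark q, Y⟩) ?_ ?_ (by simp) (by simp) (by simp)
  · have : Function.update (mark 0) q false 0 = false := by
      rw [Function.update_of_ne (by omega), mark, Function.update_self]
    simp only [step, this, trans]
    simp [update_mark (show 0 ≠ q by omega)]
  refine .trans (.scan_right (h' := q) (by omega) (by simp) fun i h1 h2 => ?_) ?_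
  · have : mark q i = true := by rw [mark, Function.update_of_ne (by omega), blank]
    rw [this]; simp [trans]
  refine .head (d := ⟨.endTop d, q - 1, blank, Y⟩) ?_ ?_ (by simp) (by simp) (by simp)
  · have : mark q q = false := by simp [mark]
    simp only [step, this, trans]
    simp only [mark, Function.update_idem, Function.update_eq_self]
    simp [Function.update_eq_self_iff, blank]
  refine .trans (.scan_left (h := cell v) (by omega) (by simp) fun i h1 h2 => ?_) ?_
  · rw [hY' i h1]; simp [trans]
  refine .of_step (by simp [step, hY, trans]) (by simp) (by simp) fun n hn => ?_
  simp only [Set.mem_singleton_iff] at hn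
  simp [hn]

theorem reaches_test (hY : Stack Y u) (huv : u < v) :
    Reaches w F.oracle x Set.univ {cell v, cell u + 1}
      ⟨.unflash, cell u + 2, blank, flashing Y u v⟩
      ⟨.next1, cell v + 1, blank, Function.update Y (cell v) (decide (F.Child x v u))⟩ := by
  have hc := cell_add_three_le huv
  set Y' := Function.update Y (cell v) true with hY'
  have h1 : ∀ n, cell u < n → n ≠ cell v → Y' n = false := fun n h1 h2 => by
    rw [hY', Function.update_of_ne h2, hY.above n h1]
  have h2 : Y' (cell v) = true := by simp [hY']
  have h3 : flashing Y u v = Function.update Y' (cell u + 1) true := rfl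
  have h4 : ∀ n, n ≠ cell u + 1 → flashing Y u v n = Y' n := fun n hn => by
    rw [h3, Function.update_of_ne hn]
  refine .head (d := ⟨.unflash', cell u + 1, blank, flashing Y u v⟩) (by simp [step, trans]) ?_
    (by simp) (by simp) (by simp)
  refine .head (d := ⟨.toTop, cell u + 2, blank, Y'⟩) ?_ ?_ (by simp) (by simp) ?_
  · have : Function.update Y' (cell u + 1) false = Y' := by
      rw [← h1 (cell u + 1) (by omega) (by omega), Function.update_eq_self]
    simp [step, trans, h3, this]
  · refine .trans (.scan_right (h' := cell v) (by omega) (by simp) fun i hi hi' => ?_) ?_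
    · rw [h1 i (by omega) (by omega)]; simp [trans]
    refine .head (d := ⟨.readA (false, false), cell v + 1, mark (cell v), Y'⟩) ?_ ?_ (by simp)
      (by simp) (by simp)
    · simp only [step, trans, h2]
      simp [mark, Function.update_eq_self_iff, h2]
    refine .trans ((reaches_records (by omega) (o := cell v - 1) (by omega)).mono subset_rfl
      (Set.empty_subset _)) ?_
    have hv : cell v + 3 * (cell v - 1) + 3 = cell (v + 1) := by
      obtain ⟨v, rfl⟩ : ∃ m, v = m + 1 := ⟨v - 1, by omega⟩
      rw [show v + 1 + 1 = v + 2 from rfl, cell_succ_succ v]; omega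
    rw [hv, Nat.sub_self, show cell v - 1 + 1 = cell v by omega]
    have := (reaches_verdict (w := w) (F := F) (x := x) (Y := Y')
      (d := records F x Y' v (cell v)) h2
      fun n hn => h1 n (by omega) (by omega)).mono subset_rfl
      (Set.singleton_subset_iff.2 (Set.mem_insert _ {cell u + 1}))
    rw [records_cell hY huv fun j hj => by rw [hY', Function.update_of_ne (by omega)]] at this
    simpa [hY'] using this
  · intro n hn
    simp only [Set.mem_insert_iff, Set.mem_singleton_iff, not_or] at hn
    exact (h4 n hn.2).symm

/-- The stack tape is scanned as long as there are no two adjacent ones. -/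
theorem reaches_scan {h h' : ℕ} (hh : h ≤ h')
    (H : ∀ j, h ≤ j → j < h' → Y j = true → Y (j + 1) = false) :
    Reaches w z x ∅ ∅ ⟨.scan (Y h), h + 1, N, Y⟩ ⟨.scan (Y h'), h' + 1, N, Y⟩ := by
  induction h', hh using Nat.le_induction with
  | base => exact .refl _
  | succ k hk ih =>
    refine (ih fun j h1 h2 => H j h1 (by omega)).trans (.of_step ?_ (by simp) (by simp) (by simp))
    have := H k hk k.lt_succ_self
    cases h1 : Y k <;> cases h2 : Y (k + 1) <;> simp_all [step, trans]

theorem reaches_pop (hv : 0 < v) (hY : Stack Y v) :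
    Reaches w z x Set.univ {cell v, cell v + 1}
      ⟨.limit, 0, blank, Function.update Y (cell v + 1) true⟩
      ⟨.next1, cell v + 1, blank, Function.update Y (cell v) false⟩ := by
  have hc := cell_add_three_le hv
  have h3 : 3 ∣ cell v := Dvd.intro _ rfl
  set Y' := Function.update Y (cell v + 1) true with hY'
  have h1 : ∀ n, n ≠ cell v + 1 → Y' n = Y n := fun n hn => by
    rw [hY', Function.update_of_ne hn]
  have hd : ∀ n, ¬ 3 ∣ n → Y n = false := fun n hn => by
    rw [← Bool.not_eq_true]; exact fun h => hn (hY.dvd n h)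
  have h0 : Y' 0 = true := by rw [h1 _ (by omega), hY.root]
  refine .head (d := ⟨.first, 1, mark 0, Y'⟩) ?_ ?_ (by simp) (by simp) (by simp)
  · simp only [step, h0, trans, blank]
    simp [mark, Function.update_eq_self_iff, h0]
  have h11 : Y' 1 = false := by rw [h1 _ (by omega), hd _ (by omega)]
  refine .head (d := ⟨.scan (Y' 1), 1 + 1, mark 0, Y'⟩) ?_ ?_ (by simp) (by simp) (by simp)
  · simp only [step, h11, trans]
    simp [Function.update_eq_self_iff, h11]
  refine .trans ((reaches_scan (h' := cell v) (by omega) fun j hj hj' hj'' => ?_).mono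
    (Set.empty_subset _) (Set.empty_subset _)) ?_
  · rw [h1 _ (by omega)] at hj'' ⊢
    have := hY.dvd _ hj''
    exact hd _ (by omega)
  have ht : Y' (cell v) = true := by rw [h1 _ (by omega), hY.top]
  have ht' : Y' (cell v + 1) = true := by simp [hY']
  refine .head (d := ⟨.back, cell v, Function.update (mark 0) (cell v + 1) false, Y'⟩) ?_ ?_
    (by simp) (by simp) (by simp)
  · simp only [step, ht, ht', trans]
    simp [Function.update_eq_self_iff, ht']
  refine .trans (.scan_left (h := 0) (by omega) (by simp) fun i h1 h2 => ?_) ?_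
  · have : Function.update (mark 0) (cell v + 1) false i = true := by
      rw [Function.update_of_ne (by omega), mark, Function.update_of_ne (by omega), blank]
    rw [this]; simp [trans]
  refine .head (d := ⟨.forth, 1, mark (cell v + 1), Y'⟩) ?_ ?_ (by simp) (by simp) (by simp)
  · have : Function.update (mark 0) (cell v + 1) false 0 = false := by
      rw [Function.update_of_ne (by omega), mark, Function.update_self]
    simp only [step, this, trans]
    simp [update_mark (show 0 ≠ cell v + 1 by omega)]
  refine .trans (.scan_right (h' := cell v + 1) (by omega) (by simp) fun i h1 h2 => ?_) ?_
  · have : mark (cell v + 1) i = true := by rw [mark, Function.update_of_ne (by omega), blank]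
    rw [this]; simp [trans]
  refine .head (d := ⟨.del, cell v, blank, Y⟩) ?_ ?_ (by simp) (by simp) ?_
  · have : mark (cell v + 1) (cell v + 1) = false := by simp [mark]
    simp only [step, this, trans]
    simp only [mark, hY', Function.update_idem]
    simp [Function.update_eq_self_iff, blank, hY.above]
  · refine .of_step (by simp [step, trans]) (by simp) (by simp) fun n hn => ?_
    simp only [Set.mem_insert_iff, Set.mem_singleton_iff, not_or] at hn
    simp [hn]
  · intro n hn
    simp only [Set.mem_insert_iff, Set.mem_singleton_iff, not_or] at hn
    simp only [hY', Function.update_of_ne hn.2]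

/-- The search starting at the node `u` fails. -/
def Fails (w : Bool) (z x : R) (Y : ℕ → Bool) (u : ℕ) : Prop :=
  Reaches w z x Set.univ {n | cell u < n} ⟨.next1, cell u + 1, blank, Y⟩
    ⟨.limit, 0, blank, Function.update Y (cell u + 1) true⟩

theorem reaches_skip (hY : Stack Y u) (huv : u < v)
    (H : F.Child x v u → Fails w F.oracle x (Function.update Y (cell v) true) v) :
    Reaches w F.oracle x Set.univ (insert (cell u + 1) {n | cell v ≤ n})
      ⟨.unflash, cell u + 2, blank, flashing Y u v⟩
      ⟨.unflash, cell u + 2, blank, flashing Y u (v + 1)⟩ := by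
  have hYv : Function.update Y (cell v) false = Y := by
    rw [← hY.above _ (cell_strictMono huv), Function.update_eq_self]
  have hc := cell_strictMono v.lt_succ_self
  have hn : Reaches w F.oracle x Set.univ (insert (cell u + 1) {n | cell v ≤ n})
      ⟨.next1, cell v + 1, blank, Y⟩ ⟨.unflash, cell u + 2, blank, flashing Y u (v + 1)⟩ := by
    refine .trans ((reaches_next v).mono (Set.empty_subset _) (Set.empty_subset _)) ?_
    refine (reaches_flash hY (by omega)).mono (Set.empty_subset _) ?_
    rintro n (rfl | rfl)
    · exact Or.inr hc.le
    · exact Or.inl rfl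
  refine .trans ((reaches_test hY huv).mono subset_rfl ?_) ?_
  · rintro n (rfl | rfl)
    · exact Or.inr (le_refl (cell v))
    · exact Or.inl rfl
  by_cases h : F.Child x v u
  · simp only [h, decide_true]
    refine .trans ((H h).mono subset_rfl fun n hn =>
      Or.inr (show cell v ≤ n from le_of_lt hn)) (.trans ?_ hn)
    have := (reaches_pop (w := w) (z := F.oracle) (x := x) (by omega : 0 < v)
      (hY.push huv)).mono (VY' := insert (cell u + 1) {n | cell v ≤ n}) subset_rfl ?_
    · rwa [Function.update_idem, hYv] at this
    · rintro n (rfl | rfl)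
      · exact Or.inr (le_refl (cell v))
      · exact Or.inr (Nat.le_succ (cell v))
  · simpa [h, hYv] using hn

theorem reaches_first_flash (hY : Stack Y u) :
    Reaches w F.oracle x Set.univ {n | cell u < n} ⟨.next1, cell u + 1, blank, Y⟩
      ⟨.unflash, cell u + 2, blank, flashing Y u (u + 1)⟩ := by
  have hc := cell_strictMono u.lt_succ_self
  refine .trans ((reaches_next u).mono (Set.empty_subset _) (Set.empty_subset _)) ?_
  refine (reaches_flash hY (by omega)).mono (Set.empty_subset _) ?_
  rintro n (rfl | rfl)
  · exact hc
  · exact Nat.lt_succ_self _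

theorem fails_of_acc (h : Acc (F.Child x) u) (hY : Stack Y u) : Fails w F.oracle x Y u := by
  induction h generalizing Y with
  | intro u _ ih =>
  refine (reaches_first_flash hY).trans ?_
  refine Reaches.limit (VN := fun _ => Set.univ)
    (VY := fun k => insert (cell u + 1) {n | cell (u + 1 + k) ≤ n})
    (c := fun k => ⟨.unflash, cell u + 2, blank, flashing Y u (u + 1 + k)⟩)
    (fun k => ?_) (fun k h => ?_) (fun _ => subset_rfl) (fun k n hn => ?_) (fun n => ?_)
    fun n => ?_
  · exact reaches_skip hY (by omega) fun hc => ih _ hc (hY.push (by omega))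
  · have h1 := cell_add_three_le (show u < u + 1 + k by omega)
    have h1' : cell u < cell (u + 1 + k) := by omega
    have h2 := cell_add_three_le (show u + 1 + k < u + 1 + (k + 1) by omega)
    have := congrFun (congrArg Cfg.Y h) (cell (u + 1 + k))
    simp only [flashing] at this
    simp [show cell (u + 1 + k) ≠ cell u + 1 by omega, hY.above _ h1',
      show cell (u + 1 + k) ≠ cell (u + 1 + (k + 1)) by omega] at this
  · have h1 := cell_add_three_le (show u < u + 1 + k by omega)
    rcases hn with rfl | hn
    · exact Nat.lt_succ_self _
    · simp only [Set.mem_ofPred_eq] at hn ⊢; omega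
  · exact Or.inl ⟨rfl, fun k => ⟨k, le_rfl, rfl⟩⟩
  · by_cases hn : n = cell u + 1
    · subst hn
      exact Or.inl ⟨by simp, fun k => ⟨k, le_rfl, by simp [flashing]⟩⟩
    · refine Or.inr ⟨n, ?_, fun l hl => ?_⟩
      · have := le_cell (u + 1 + n)
        simp only [flashing]
        rw [Function.update_of_ne hn, Function.update_of_ne hn, Function.update_of_ne (by omega)]
      · have := le_cell (u + 1 + l)
        simp only [Set.mem_insert_iff, hn, Set.mem_ofPred_eq, false_or, not_le]
        omega

theorem exists_reaches_of_not_acc (h : ¬ Acc (F.Child x) u) (hY : Stack Y u) :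
    ∃ v, u < v ∧ ¬ Acc (F.Child x) v ∧
      Reaches w F.oracle x Set.univ {n | cell u < n} ⟨.next1, cell u + 1, blank, Y⟩
        ⟨.next1, cell v + 1, blank, Function.update Y (cell v) true⟩ := by
  have hex : ∃ v, F.Child x v u ∧ ¬ Acc (F.Child x) v := by
    by_contra! H
    exact h ⟨_, fun v hv => H v hv⟩
  obtain ⟨hv, hv'⟩ := Nat.find_spec hex
  have hmin := fun m => Nat.find_min (m := m) hex
  set v := Nat.find hex
  have huv : u < v := hv.2.1 ▸ F.par_lt v hv.1
  have hreach : ∀ m, u + 1 ≤ m → m ≤ v → Reaches w F.oracle x Set.univ {n | cell u < n}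
      ⟨.next1, cell u + 1, blank, Y⟩ ⟨.unflash, cell u + 2, blank, flashing Y u m⟩ := by
    intro m hm
    induction m, hm using Nat.le_induction with
    | base => exact fun _ => reaches_first_flash hY
    | succ m hm ih =>
      intro hmv
      refine (ih (by omega)).trans ((reaches_skip hY hm fun hc => ?_).mono subset_rfl ?_)
      · refine fails_of_acc ?_ (hY.push hm)
        by_contra hacc
        exact hmin m hmv ⟨hc, hacc⟩
      · have h1 := cell_add_three_le (show u < m by omega)
        rintro n (rfl | hn)
        · exact Nat.lt_succ_self _
        · simp only [Set.mem_ofPred_eq] at hn ⊢; omega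
  refine ⟨v, huv, hv', (hreach v huv le_rfl).trans ?_⟩
  have := reaches_test (w := w) (F := F) (x := x) hY huv
  simp only [hv, decide_true] at this
  refine this.mono subset_rfl ?_
  have h1 := cell_add_three_le huv
  rintro n (rfl | rfl)
  · simp only [Set.mem_ofPred_eq]; omega
  · exact Nat.lt_succ_self _

/-- If the searched tree has an infinite branch, the search arrives at a limit with an infinite
branch on the stack tape. -/
theorem reaches_branch (h : ¬ Acc (F.Child x) u) (hY : Stack Y u) :
    ∃ Y' : ℕ → Bool, Y' 0 = true ∧ (∀ n, Y' n = true → 3 ∣ n) ∧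
      Reaches w F.oracle x Set.univ Set.univ ⟨.next1, cell u + 1, blank, Y⟩
        ⟨.limit, 0, blank, Y'⟩ := by
  let P := {p : ℕ × (ℕ → Bool) // ¬ Acc (F.Child x) p.1 ∧ Stack p.2 p.1}
  have hex : ∀ p : P, ∃ q : P, p.1.1 < q.1.1 ∧
      Reaches w F.oracle x Set.univ {n | cell p.1.1 < n} ⟨.next1, cell p.1.1 + 1, blank, p.1.2⟩
        ⟨.next1, cell q.1.1 + 1, blank, q.1.2⟩ := by
    rintro ⟨⟨u, Y⟩, h, hY⟩
    obtain ⟨v, huv, hv, hr⟩ := exists_reaches_of_not_acc (w := w) h hY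
    exact ⟨⟨⟨v, _⟩, hv, hY.push huv⟩, huv, hr⟩
  choose nx hlt hr using hex
  let s : ℕ → P := fun k => nx^[k] ⟨⟨u, Y⟩, h, hY⟩
  have hs : ∀ k, s (k + 1) = nx (s k) := fun k => Function.iterate_succ_apply' _ _ _
  have hmono : StrictMono fun k => (s k).1.1 := strictMono_nat_of_lt_succ fun k => by
    rw [hs]; exact hlt _
  have hle : ∀ k, k ≤ cell (s k).1.1 := fun k => (hmono.id_le k).trans (le_cell _)
  refine ⟨fun n => (s n).1.2 n, hY.root, fun n hn => (s n).2.2.dvd n hn, ?_⟩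
  refine Reaches.limit (VN := fun _ => Set.univ) (VY := fun k => {n | cell (s k).1.1 < n})
    (c := fun k => ⟨.next1, cell (s k).1.1 + 1, blank, (s k).1.2⟩)
    (fun k => ?_) (fun k h => ?_) (fun _ => subset_rfl) (fun k => Set.subset_univ _)
    (fun n => Or.inl ⟨rfl, fun k => ⟨k, le_rfl, rfl⟩⟩)
    fun n => Or.inr ⟨n, rfl, fun l hl => ?_⟩
  · rw [hs]; exact hr (s k)
  · have h1 := congrArg Cfg.hd h
    have h2 := cell_strictMono (hmono (Nat.lt_add_one k))
    simp only at h1 h2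
    omega
  · have := hle l
    simp only [Set.mem_ofPred_eq]
    omega

theorem reaches_accept (h0 : Y 0 = true) (hd : ∀ n, Y n = true → 3 ∣ n) :
    Reaches w z x Set.univ Set.univ ⟨.limit, 0, blank, Y⟩
      ⟨.halt, 1, mark 0, Function.update (fun _ => false) 0 w⟩ := by
  have hd' : ∀ n, ¬ 3 ∣ n → Y n = false := fun n hn => by
    rw [← Bool.not_eq_true]; exact fun h => hn (hd n h)
  have h1 : Y 1 = false := hd' 1 (by norm_num)
  refine .head (d := ⟨.first, 1, mark 0, Y⟩) ?_ ?_ (by simp) (by simp) (by simp)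
  · simp only [step, h0, trans, blank]
    simp [mark, Function.update_eq_self_iff, h0]
  refine .head (d := ⟨.scan (Y 1), 1 + 1, mark 0, Y⟩) ?_ ?_ (by simp) (by simp) (by simp)
  · simp only [step, h1, trans]
    simp [Function.update_eq_self_iff, h1]
  refine .trans (d := ⟨.limit, 0, mark 0, Y⟩) ?_ ?_
  · refine Reaches.limit (VN := fun _ => ∅) (VY := fun _ => ∅)
      (c := fun k => ⟨.scan (Y (1 + k)), 1 + k + 1, mark 0, Y⟩)
      (fun k => reaches_scan (by omega) fun j _ _ hj => hd' _ ?_) (fun k h => ?_) (by simp)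
      (by simp) (fun n => Or.inr ⟨0, rfl, by simp⟩) (fun n => Or.inr ⟨0, rfl, by simp⟩)
    · have := hd j hj
      omega
    · have := congrArg Cfg.hd h
      simp only at this
      omega
  refine .head (d := ⟨.clean, 1, mark 0, fun n => if n ≤ 0 then false else Y n⟩) ?_ ?_ (by simp)
    (by simp) (by simp)
  · have : mark 0 0 = false := by simp [mark]
    simp only [step, h0, this, trans]
    simp only [if_true, Cfg.mk.injEq, true_and]
    refine ⟨by simp [Function.update_eq_self_iff, this], ?_⟩
    funext n
    simp [Function.update_apply]
  refine .trans (d := ⟨.limit, 0, mark 0, fun _ => false⟩) ?_ ?_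
  · refine Reaches.limit (VN := fun _ => ∅) (VY := fun k => {k + 1})
      (c := fun k => ⟨.clean, k + 1, mark 0, fun n => if n ≤ k then false else Y n⟩)
      (fun k => .of_step ?_ (by simp) (by simp) fun n hn => ?_) (fun k h => ?_) (by simp)
      (by simp) (fun n => Or.inr ⟨0, rfl, by simp⟩) (fun n => Or.inr ⟨n, by simp, ?_⟩)
    · simp only [step, trans, if_true, Cfg.mk.injEq, true_and, Function.update_eq_self]
      funext n
      simp only [Function.update_apply]
      split_ifs <;> first | rfl | omega
    · simp only [Set.mem_singleton_iff] at hn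
      simp only
      split_ifs <;> first | rfl | omega
    · have := congrArg Cfg.hd h
      simp only at this
      omega
    · intro l hl hn
      simp only [Set.mem_singleton_iff] at hn
      omega
  · have : mark 0 0 = false := by simp [mark]
    refine .of_step ?_ (by simp) (by simp) (by simp)
    simp only [step, this, trans]
    simp [Function.update_eq_self_iff, this]

theorem reaches_reject (h0 : Y 0 = true) (h1 : Y 1 = true) (hY : ∀ n, 1 < n → Y n = false) :
    Reaches w z x Set.univ Set.univ ⟨.limit, 0, blank, Y⟩
      ⟨.halt, 1, mark 0, Function.update (fun _ => false) 0 !w⟩ := by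
  refine .head (d := ⟨.first, 1, mark 0, Y⟩) ?_ ?_ (by simp) (by simp) (by simp)
  · simp only [step, h0, trans, blank]
    simp [mark, Function.update_eq_self_iff, h0]
  refine .head (d := ⟨.reject, 0, mark 0, Function.update Y 1 false⟩) ?_ ?_ (by simp) (by simp)
    (by simp)
  · simp only [step, h1, trans]
    simp
  refine .of_step ?_ (by simp) (by simp) (by simp)
  simp only [step, trans]
  simp only [if_true, Cfg.mk.injEq, true_and, Function.update_eq_self]
  funext n
  simp only [Function.update_apply]
  split_ifs with ha hb
  · rfl
  · rfl
  · exact hY n (by omega)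

/-- The stack tape holding only the root. -/
def rootStack : ℕ → Bool := fun n => decide (n = 0)

theorem stack_rootStack : Stack rootStack 0 :=
  ⟨by simp [rootStack], by simp [rootStack, cell_zero], fun n hn => by
    rw [cell_zero] at hn; simp [rootStack, hn.ne'], fun n hn => by simp_all [rootStack]⟩

theorem reaches_root :
    Reaches w z x Set.univ Set.univ ⟨.start, 0, fun _ => false, fun _ => false⟩
      ⟨.next1, cell 0 + 1, blank, rootStack⟩ := by
  refine .trans (d := ⟨.limit, 0, blank, fun _ => false⟩) ?_ ?_
  · have := Reaches.limit (w := w) (z := z) (x := x) (VN := fun k => {k}) (VY := fun k => ∅)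
      (VN' := Set.univ) (VY' := Set.univ)
      (c := fun k => ⟨.start, k, fun n => decide (n < k), fun _ => false⟩)
      (N := blank) (Y := fun _ => false)
      (fun k => .of_step ?_ (by simp) (fun n hn => ?_) (by simp)) (fun k h => ?_) (by simp)
      (by simp) (fun n => Or.inr ⟨n + 1, by simp [blank], fun l hl hn => ?_⟩)
      (fun n => Or.inr ⟨0, rfl, by simp⟩)
    · simpa using this
    · simp only [step, trans, if_true, Cfg.mk.injEq, true_and, Function.update_eq_self, and_true]
      funext n
      simp only [Function.update_apply]
      split_ifs with h
      · simp [h]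
      · exact decide_eq_decide.2 (by omega)
    · simp only [Set.mem_singleton_iff] at hn
      exact decide_eq_decide.2 (by omega)
    · have := congrArg Cfg.hd h
      simp only at this
      omega
    · simp only [Set.mem_singleton_iff] at hn
      omega
  · refine .of_step ?_ (by simp) (by simp) (by simp)
    simp only [step, blank, trans]
    simp only [if_true, Cfg.mk.injEq, true_and, cell_zero]
    refine ⟨by simp [Function.update_eq_self_iff, blank], ?_⟩
    funext n
    by_cases h : n = 0 <;> simp [rootStack, h]

theorem outputs_of_reaches {N Y : ℕ → Bool} {h : ℕ}
    (H : Reaches w z x Set.univ Set.univ ⟨.start, 0, fun _ => false, fun _ => false⟩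
      ⟨.halt, h, N, Y⟩) : (machine w).outputs z x Y := by
  obtain ⟨β, -, hβ, hseg⟩ := H 0 (by
    rw [OMachine.snap_zero]
    simp only [OMachine.init, Cfg.toSnap, machine]
    congr 1
    funext i n
    fin_cases i <;> simp)
  refine ⟨β, ⟨?_, fun γ hγ hh => ?_⟩, ?_⟩
  · rw [OMachine.haltedAt, hβ]; rfl
  · obtain ⟨e, he, hst, -⟩ := hseg γ zero_le hγ.le
    rw [OMachine.haltedAt, he] at hh
    exact hst hγ (stEquiv.injective hh)
  · rw [hβ]; rfl

theorem machine_outputs_of_not_acc (h : ¬ Acc (F.Child x) 0) :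
    (machine w).outputs F.oracle x (Function.update (fun _ => false) 0 w) := by
  obtain ⟨Y, h0, hd, hr⟩ := reaches_branch (w := w) h stack_rootStack
  exact outputs_of_reaches ((reaches_root.trans hr).trans (reaches_accept h0 hd))

theorem machine_outputs_of_acc (h : Acc (F.Child x) 0) :
    (machine w).outputs F.oracle x (Function.update (fun _ => false) 0 !w) := by
  refine outputs_of_reaches ((reaches_root.trans
    ((fails_of_acc h stack_rootStack).mono subset_rfl (Set.subset_univ _))).trans
    (reaches_reject ?_ ?_ ?_))
  · simp [cell_zero, rootStack]
  · simp [cell_zero]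
  · intro n hn
    simp only [cell_zero, zero_add]
    rw [Function.update_of_ne hn.ne']
    simp [rootStack, (zero_lt_one.trans hn).ne']

end TreeSearch

end ITTM

namespace ITTM

namespace TreeSearch

/-- The node numbered by a finite sequence, listed in reverse order; the second components stand
for bits through `Nat.bodd`. -/
def code (l : List (ℕ × ℕ)) : ℕ := Encodable.encode l + 1

/-- The finite sequence with number `v`. -/
def seq (v : ℕ) : List (ℕ × ℕ) := Denumerable.ofNat _ (v - 1)

theorem code_pos (l : List (ℕ × ℕ)) : 0 < code l := Nat.succ_pos _

theorem seq_code (l : List (ℕ × ℕ)) : seq (code l) = l := by simp [seq, code]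

theorem code_seq {v : ℕ} (hv : 0 < v) : code (seq v) = v := by
  simp only [seq, code, Denumerable.encode_ofNat]; omega

theorem code_lt_code_cons (a : ℕ × ℕ) (l : List (ℕ × ℕ)) : code l < code (a :: l) := by
  simp only [code, Encodable.encode_list_cons]
  have := Nat.right_le_pair (Encodable.encode a) (Encodable.encode l)
  omega

theorem length_lt_code (l : List (ℕ × ℕ)) : l.length < code l := by
  have := Encodable.length_le_encode l
  simp only [code]; omega

/-- The pair `(y, X)` extends the finite sequence `l`. -/
def Extends : List (ℕ × ℕ) → (ℕ → ℕ) → R → Prop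
  | [], _, _ => True
  | a :: l, y, X => Extends l y X ∧ y l.length = a.1 ∧ X l.length = a.2.bodd

/-- The tree of finite approximations to the graph of `f`. -/
def graphTree (f : (ℕ → ℕ) → R) : Tree where
  par v := match seq v with
    | [] => 0
    | _ :: l => code l
  good v := ∃ y, Extends (seq v) y (f y)
  test v := match seq v with
    | [] => none
    | a :: l => some (l.length, a.2.bodd)
  par_lt v hv := by
    have := code_seq hv
    rcases h : seq v with _ | ⟨a, l⟩
    · exact hv
    · rw [← this, h]; exact code_lt_code_cons a l
  test_lt v k b hv hk := by
    have := code_seq hv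
    rcases h : seq v with _ | ⟨a, l⟩
    · simp [h] at hk
    · simp only [h, Option.some.injEq, Prod.mk.injEq] at hk
      rw [← this, h, ← hk.1]
      exact ((length_lt_code l).trans (code_lt_code_cons a l)).trans_le (le_cell _)
  test_ne v k b hv hk := by
    rcases h : seq v with _ | ⟨a, l⟩
    · simp [h] at hk
    · simp only [h, Option.some.injEq, Prod.mk.injEq] at hk
      rw [← hk.1]
      exact ((length_lt_code l).trans_le (le_cell _)).ne

variable {f : (ℕ → ℕ) → R} {x : R}

theorem child_graphTree_cons {a : ℕ × ℕ} {l : List (ℕ × ℕ)} :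
    (graphTree f).Child x (code (a :: l)) (code l) ↔
      (∃ y, Extends (a :: l) y (f y)) ∧ x l.length = a.2.bodd := by
  simp [Tree.Child, Tree.Admits, graphTree, seq_code, code_pos]

theorem child_graphTree_zero {v : ℕ} (h : (graphTree f).Child x v 0) : v = code [] := by
  obtain ⟨hv, hp, -⟩ := h
  rw [← code_seq hv]
  rcases hs : seq v with _ | ⟨a, l⟩
  · rfl
  · simp [graphTree, hs, code] at hp

theorem child_graphTree_code {v : ℕ} {l : List (ℕ × ℕ)}
    (h : (graphTree f).Child x v (code l)) : ∃ a, v = code (a :: l) := by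
  obtain ⟨hv, hp, -⟩ := h
  rw [← code_seq hv]
  rcases hs : seq v with _ | ⟨a, l'⟩
  · simp [graphTree, hs, code] at hp
  · simp only [graphTree, hs] at hp
    refine ⟨a, ?_⟩
    rw [← seq_code l', hp, seq_code]

/-- The first `k` terms of a sequence, in reverse order. -/
def initial (s : ℕ → ℕ × ℕ) : ℕ → List (ℕ × ℕ)
  | 0 => []
  | k + 1 => s k :: initial s k

theorem length_initial (s : ℕ → ℕ × ℕ) (k : ℕ) : (initial s k).length = k := by
  induction k with
  | zero => rfl
  | succ k ih => simp [initial, ih]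

theorem extends_initial {s : ℕ → ℕ × ℕ} {y : ℕ → ℕ} {X : R} {k : ℕ} :
    Extends (initial s k) y X ↔ ∀ i < k, y i = (s i).1 ∧ X i = (s i).2.bodd := by
  induction k with
  | zero => simp [initial, Extends]
  | succ k ih => simp only [initial, Extends, ih, length_initial, Nat.forall_lt_succ_right]

theorem not_acc_graphTree_of_eq {y : ℕ → ℕ} (h : f y = x) : ¬ Acc (graphTree f |>.Child x) 0 := by
  let s : ℕ → ℕ × ℕ := fun i => (y i, (x i).toNat)
  have hb : ∀ b : Bool, b.toNat.bodd = b := by decide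
  have hs : ∀ k, Extends (initial s k) y (f y) := fun k =>
    extends_initial.2 fun i _ => ⟨rfl, by rw [h]; exact (hb _).symm⟩
  have key : ∀ v, Acc ((graphTree f).Child x) v → ∀ k, v ≠ code (initial s k) := by
    intro v hv
    induction hv with
    | intro v _ ih =>
      rintro k rfl
      refine ih _ ?_ (k + 1) rfl
      exact child_graphTree_cons.2 ⟨⟨y, hs (k + 1)⟩, by
        rw [length_initial]; exact (hb _).symm⟩
  intro h0
  refine key (code []) (h0.inv ?_) 0 rfl
  simp only [Tree.Child, Tree.Admits, graphTree, seq_code]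
  exact ⟨Nat.succ_pos _, trivial, ⟨y, trivial⟩, by simp⟩

theorem exists_eq_of_not_acc_graphTree (hf : Continuous f)
    (h : ¬ Acc (graphTree f |>.Child x) 0) : ∃ y, f y = x := by
  have hex : ∀ p : {l : List (ℕ × ℕ) // ¬ Acc ((graphTree f).Child x) (code l)},
      ∃ a, ¬ Acc ((graphTree f).Child x) (code (a :: p.1)) ∧
        (∃ y, Extends (a :: p.1) y (f y)) ∧ x p.1.length = a.2.bodd := by
    rintro ⟨l, hl⟩
    by_contra! H
    refine hl ⟨_, fun v hv => ?_⟩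
    obtain ⟨a, rfl⟩ := child_graphTree_code hv
    by_contra hv'
    obtain ⟨h1, h2⟩ := child_graphTree_cons.1 hv
    exact H a hv' h1 h2
  choose nx hacc hext hx using hex
  have h0 : ¬ Acc ((graphTree f).Child x) (code []) := fun h0 => h ⟨_, fun v hv => by
    rwa [child_graphTree_zero hv]⟩
  let L : ℕ → {l : List (ℕ × ℕ) // ¬ Acc ((graphTree f).Child x) (code l)} := fun k =>
    Nat.rec ⟨[], h0⟩ (fun _ p => ⟨nx p :: p.1, hacc p⟩) k
  let s : ℕ → ℕ × ℕ := fun k => nx (L k)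
  have hL : ∀ k, (L k).1 = initial s k := by
    intro k
    induction k with
    | zero => rfl
    | succ k ih => rw [initial, ← ih]
  have hxs : ∀ k, x k = (s k).2.bodd := fun k => by
    have := hx (L k)
    rwa [hL, length_initial] at this
  have hy : ∀ k, ∃ y, Extends (initial s (k + 1)) y (f y) := fun k => by
    have := hext (L k)
    rwa [hL] at this
  choose Y hY using hy
  simp only [extends_initial] at hY
  have hlim : ∀ {β : Type} [TopologicalSpace β] (g : ℕ → ℕ → β) (t : ℕ → β),
      (∀ k, ∀ i < k + 1, g k i = t i) → Filter.Tendsto g Filter.atTop (nhds t) := by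
    intro β _ g t hg
    rw [tendsto_pi_nhds]
    intro i
    refine tendsto_const_nhds.congr' ?_
    filter_upwards [Filter.eventually_ge_atTop i] with k hk
    exact (hg k i (by omega)).symm
  refine ⟨fun i => (s i).1, ?_⟩
  refine tendsto_nhds_unique ((hf.tendsto _).comp (hlim Y _ fun k i hi => (hY k i hi).1)) ?_
  exact hlim _ x fun k i hi => by rw [hxs]; exact (hY k i hi).2

theorem exists_tree_of_analyticSet {A : Set R} (hA : MeasureTheory.AnalyticSet A) :
    ∃ F : Tree, ∀ x, x ∈ A ↔ ¬ Acc (F.Child x) 0 := by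
  rw [MeasureTheory.AnalyticSet] at hA
  rcases hA with rfl | ⟨f, hf, rfl⟩
  · refine ⟨⟨fun _ => 0, fun _ => False, fun _ => none, fun _ h => h, by simp, by simp⟩,
      fun x => ?_⟩
    simp only [Set.mem_empty_iff_false, false_iff, not_not]
    exact ⟨_, fun v hv => hv.2.2.1.elim⟩
  · exact ⟨graphTree f, fun x => ⟨fun ⟨_, hy⟩ => not_acc_graphTree_of_eq hy,
      fun h => exists_eq_of_not_acc_graphTree hf h⟩⟩

theorem update_zero_true : Function.update (fun _ => false) 0 true = oneR := by
  funext n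
  by_cases h : n = 0 <;> simp [oneR, h]

theorem update_zero_false : Function.update (fun _ => false) 0 false = zeroR := by
  funext n
  simp [zeroR]

end TreeSearch

end ITTM
/-- **Every Π¹₁ (and every Σ¹₁) set is infinite time decidable** (with a real
parameter): for every set `A ⊆ 2^ℕ` which is coanalytic (its complement is
analytic) or analytic, there are a real oracle `z` and an oracle program such
that on any input `x` the oracle computation halts with output `⟨1,0,0,…⟩` if
`x ∈ A` and `⟨0,0,0,…⟩` if `x ∉ A`. -/
theorem coanalytic_and_analytic_decidable_from_a_real (A : Set ITTM.R)
    (hA : MeasureTheory.AnalyticSet Aᶜ ∨ MeasureTheory.AnalyticSet A) :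
    ∃ (z : ITTM.R) (M : ITTM.OMachine), ∀ x : ITTM.R,
      (x ∈ A → M.outputs z x ITTM.oneR) ∧ (x ∉ A → M.outputs z x ITTM.zeroR) := by
  rcases hA with hA | hA
  · obtain ⟨F, hF⟩ := ITTM.TreeSearch.exists_tree_of_analyticSet hA
    refine ⟨F.oracle, ITTM.TreeSearch.machine false, fun x => ⟨fun hx => ?_, fun hx => ?_⟩⟩
    · rw [← ITTM.TreeSearch.update_zero_true]
      exact ITTM.TreeSearch.machine_outputs_of_acc (not_not.1 fun h => (hF x).2 h hx)
    · rw [← ITTM.TreeSearch.update_zero_false]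
      exact ITTM.TreeSearch.machine_outputs_of_not_acc ((hF x).1 hx)
  · obtain ⟨F, hF⟩ := ITTM.TreeSearch.exists_tree_of_analyticSet hA
    refine ⟨F.oracle, ITTM.TreeSearch.machine true, fun x => ⟨fun hx => ?_, fun hx => ?_⟩⟩
    · rw [← ITTM.TreeSearch.update_zero_true]
      exact ITTM.TreeSearch.machine_outputs_of_not_acc ((hF x).1 hx)
    · rw [← ITTM.TreeSearch.update_zero_false]
      exact ITTM.TreeSearch.machine_outputs_of_acc (not_not.1 fun h => hx ((hF x).2 h))
end

section
/- For every program p, both the graph G = {(x,y) ∈ 2^ℕ × 2^ℕ : φ_p(x) halts with output y} and its complement (2^ℕ × 2^ℕ) \ G are projections of coanalytic sets: each equals {(x,y) : ∃ z ∈ 2^ℕ, (x,y,z) ∈ C} for some coanalytic C ⊆ 2^ℕ × 2^ℕ × 2^ℕ (products carrying the product topology). Consequently every infinite time semi-decidable subset of 2^ℕ, as well as its complement, is the projection of a coanalytic subset of 2^ℕ × 2^ℕ. -/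
open scoped Classical

/-- A subset of the plane `2^ℕ × 2^ℕ` is the projection of a coanalytic
subset of `2^ℕ × 2^ℕ × 2^ℕ` (i.e. it is `Σ¹₂`). -/
def IsProjCoanalytic2 (S : Set (ITTM.R × ITTM.R)) : Prop :=
  ∃ C : Set (ITTM.R × ITTM.R × ITTM.R), MeasureTheory.AnalyticSet Cᶜ ∧
    S = {q : ITTM.R × ITTM.R | ∃ z : ITTM.R, (q.1, q.2, z) ∈ C}

/-- A subset of `2^ℕ` is the projection of a coanalytic subset of
`2^ℕ × 2^ℕ` (i.e. it is `Σ¹₂`). -/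
def IsProjCoanalytic1 (A : Set ITTM.R) : Prop :=
  ∃ C : Set (ITTM.R × ITTM.R), MeasureTheory.AnalyticSet Cᶜ ∧
    A = {x : ITTM.R | ∃ z : ITTM.R, (x, z) ∈ C}

namespace ITTM.Machine

open Order Ordinal

variable {M : Machine} {x : R}

theorem snap_zero : M.snap x 0 = M.init x := by
  rw [snap, WellFounded.fix_eq]
  simp

theorem snap_add_one (α : Ordinal.{0}) : M.snap x (α + 1) = M.stepSnap (M.snap x α) := by
  have hs : ∃ β, β < α + 1 ∧ α + 1 = β + 1 := ⟨α, lt_add_one α, rfl⟩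
  have hα : hs.choose = α :=
    (Order.succ_injective (by simpa [Order.succ_eq_add_one] using hs.choose_spec.2)).symm
  rw [snap, WellFounded.fix_eq, dif_neg (by simp), dif_pos hs]
  exact congrArg (fun β => M.stepSnap (M.snap x β)) hα

theorem snap_of_isSuccLimit {α : Ordinal.{0}} (hα : IsSuccLimit α) :
    M.snap x α =
      { state := M.limit
        head := 0
        tape := fun i n => decide (∀ β < α, ∃ γ, β ≤ γ ∧ γ < α ∧ (M.snap x γ).tape i n = true) } := by
  rw [snap, WellFounded.fix_eq, dif_neg (show ¬ α = 0 from hα.ne_bot), dif_neg]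
  · simp only [exists_prop]
  · rintro ⟨β, hβ, h⟩
    exact (hα.succ_lt hβ).ne (by rw [h, Order.succ_eq_add_one])

theorem tape_of_isSuccLimit {α : Ordinal.{0}} (hα : IsSuccLimit α) (i : Fin 3) (n : ℕ) :
    (M.snap x α).tape i n = true ↔
      ∀ β < α, ∃ γ, β ≤ γ ∧ γ < α ∧ (M.snap x γ).tape i n = true := by
  rw [snap_of_isSuccLimit hα]
  simp only [decide_eq_true_eq]

theorem snap_eq_of_isSuccLimit {α : Ordinal.{0}} (hα : IsSuccLimit α) {s : Snapshot M.Q}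
    (hstate : s.state = M.limit) (hhead : s.head = 0)
    (htape : ∀ i n, (M.snap x α).tape i n = true ↔ s.tape i n = true) : M.snap x α = s := by
  have h : (M.snap x α).tape = s.tape := funext₂ fun i n => Bool.eq_iff_iff.2 (htape i n)
  rw [snap_of_isSuccLimit hα] at h ⊢
  obtain ⟨q, k, t⟩ := s
  obtain rfl : q = M.limit := hstate
  obtain rfl : k = 0 := hhead
  exact congrArg (Snapshot.mk M.limit 0) h

/-- The computation from a stage onwards is determined by the snapshot at that stage. -/
theorem snap_add_congr {α β : Ordinal.{0}} (h : M.snap x α = M.snap x β) (η : Ordinal.{0}) :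
    M.snap x (α + η) = M.snap x (β + η) := by
  induction η using Ordinal.limitRecOn with
  | zero => simpa using h
  | add_one η ih => rw [← add_assoc, ← add_assoc, snap_add_one, snap_add_one, ih]
  | limit η hη ih =>
    have key : ∀ (α : Ordinal.{0}) (i : Fin 3) (n : ℕ), (M.snap x (α + η)).tape i n = true ↔
        ∀ ξ < η, ∃ ζ, ξ ≤ ζ ∧ ζ < η ∧ (M.snap x (α + ζ)).tape i n = true := by
      intro α i n
      rw [tape_of_isSuccLimit (isSuccLimit_add α hη)]
      constructor
      · intro H ξ hξ
        obtain ⟨γ, h1, h2, h3⟩ := H (α + ξ) (by gcongr)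
        obtain ⟨ζ, rfl⟩ := exists_add_of_le ((le_add_right (le_refl α)).trans h1)
        exact ⟨ζ, by simpa using h1, by simpa using h2, h3⟩
      · intro H δ hδ
        have : δ - α < η := by
          rcases le_total δ α with hle | hle
          · rw [Ordinal.sub_eq_zero_iff_le.2 hle]
            exact hη.bot_lt
          · rwa [← add_lt_add_iff_left α, Ordinal.add_sub_cancel_of_le hle]
        obtain ⟨ζ, h1, h2, h3⟩ := H _ this
        exact ⟨α + ζ, (Ordinal.sub_le).1 h1, by gcongr, h3⟩
    refine snap_eq_of_isSuccLimit (isSuccLimit_add α hη) ?_ ?_ fun i n => ?_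
    · rw [snap_of_isSuccLimit (isSuccLimit_add β hη)]
    · rw [snap_of_isSuccLimit (isSuccLimit_add β hη)]
    · rw [key, key]
      refine forall₂_congr fun ξ _ => exists_congr fun ζ => and_congr_right fun _ =>
        and_congr_right fun hζ => by rw [ih ζ hζ]

/-- The computation of `M` on `x` visibly loops between the stages `α` and `β` without having
halted: the two stages show the same limit snapshot, and no cell showing `0` there shows `1` in
between. -/
structure LoopsBetween (M : Machine) (x : R) (α β : Ordinal.{0}) : Prop where
  lt : α < β
  state : (M.snap x α).state = M.limit
  head : (M.snap x α).head = 0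
  snap_eq : M.snap x β = M.snap x α
  tape : ∀ γ, α ≤ γ → γ < β → ∀ i n, (M.snap x α).tape i n = false → (M.snap x γ).tape i n = false
  not_haltedAt : ∀ γ < β, ¬ M.haltedAt x γ

theorem LoopsBetween.not_halts {α β : Ordinal.{0}} (h : M.LoopsBetween x α β) :
    ¬ M.halts x := by
  obtain ⟨δ, rfl⟩ := exists_add_of_le h.lt.le
  have hδ : δ ≠ 0 := by
    rintro rfl
    simpa using h.lt
  have rep : ∀ ξ, M.snap x (α + δ * ξ) = M.snap x α := by
    intro ξ
    induction ξ using Ordinal.limitRecOn with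
    | zero => simp
    | add_one ξ ih =>
      rw [mul_add_one, ← add_assoc, snap_add_congr ih, h.snap_eq]
    | limit ξ hξ ih =>
      have hl : IsSuccLimit (α + δ * ξ) :=
        isSuccLimit_add α (isSuccLimit_mul_right (pos_iff_ne_zero.2 hδ) hξ)
      refine snap_eq_of_isSuccLimit hl h.state h.head fun i n => ?_
      rw [tape_of_isSuccLimit hl]
      constructor
      · intro H
        obtain ⟨γ, h1, h2, h3⟩ := H α (by
          simpa using pos_iff_ne_zero.2 (mul_ne_zero hδ hξ.ne_bot))
        obtain ⟨ζ, rfl⟩ := exists_add_of_le h1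
        have hζ : ζ / δ < ξ := (Ordinal.lt_mul_iff_div_lt hδ).1 (by simpa using h2)
        rw [← Ordinal.div_add_mod ζ δ, ← add_assoc, snap_add_congr (ih _ hζ)] at h3
        by_contra hf
        rw [h.tape (α + ζ % δ) (le_add_right le_rfl) (by
          have := Ordinal.mod_lt ζ hδ
          gcongr) i n (by simpa using hf)] at h3
        exact absurd h3 (by simp)
      · intro H γ hγ
        have hlt : γ - α < δ * ξ := by
          rcases le_total γ α with hle | hle
          · rw [Ordinal.sub_eq_zero_iff_le.2 hle]
            exact pos_iff_ne_zero.2 (mul_ne_zero hδ hξ.ne_bot)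
          · rwa [← add_lt_add_iff_left α, Ordinal.add_sub_cancel_of_le hle]
        obtain ⟨ζ, hζ, hζ'⟩ := (Ordinal.lt_mul_iff_of_isSuccLimit hξ).1 hlt
        exact ⟨α + δ * ζ, Ordinal.sub_le.1 hζ'.le, by
          have : δ * ζ < δ * ξ := mul_lt_mul_of_pos_left hζ (pos_iff_ne_zero.2 hδ)
          gcongr, by rw [ih ζ hζ, H]⟩
  rintro ⟨γ, hγ⟩
  rcases lt_or_ge γ α with hlt | hge
  · exact h.not_haltedAt γ (hlt.trans h.lt) hγ
  · obtain ⟨ζ, rfl⟩ := exists_add_of_le hge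
    refine h.not_haltedAt (α + ζ % δ) (by have := Ordinal.mod_lt ζ hδ; gcongr) ?_
    rwa [haltedAt, ← Ordinal.div_add_mod ζ δ, ← add_assoc, snap_add_congr (rep _)] at hγ

/-- The snapshot at stage `ω₁` already appears at unboundedly many countable stages. -/
theorem exists_snap_eq_snap_omega_one (M : Machine) (x : R) {δ : Ordinal.{0}} (hδ : δ < ω_ 1)
    (hzero : ∀ i n, (M.snap x (ω_ 1)).tape i n = false →
      ∀ γ, δ ≤ γ → γ < ω_ 1 → (M.snap x γ).tape i n = false) :
    ∃ α, δ < α ∧ α < ω_ 1 ∧ M.snap x α = M.snap x (ω_ 1) := by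
  have hω : IsSuccLimit (ω_ 1 : Ordinal.{0}) := Cardinal.isSuccLimit_omega 1
  have next : ∀ β : Ordinal.{0}, ∃ β', β < ω_ 1 → β < β' ∧ β' < ω_ 1 ∧
      ∀ i n, (M.snap x (ω_ 1)).tape i n = true →
        ∃ γ, β ≤ γ ∧ γ < β' ∧ (M.snap x γ).tape i n = true := by
    intro β
    by_cases hβ : β < ω_ 1
    swap
    · exact ⟨0, fun h => absurd h hβ⟩
    have hex : ∀ p : Fin 3 × ℕ, ∃ γ, β ≤ γ ∧ γ < ω_ 1 ∧
        ((M.snap x (ω_ 1)).tape p.1 p.2 = true → (M.snap x γ).tape p.1 p.2 = true) := by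
      intro p
      by_cases hp : (M.snap x (ω_ 1)).tape p.1 p.2 = true
      · obtain ⟨γ, h1, h2, h3⟩ := (tape_of_isSuccLimit hω p.1 p.2).1 hp β hβ
        exact ⟨γ, h1, h2, fun _ => h3⟩
      · exact ⟨β, le_rfl, hβ, fun h => absurd h hp⟩
    choose g h1 h2 h3 using hex
    have hle : ∀ p, g p < (⨆ p, g p) + 1 := fun p => Order.lt_add_one_iff.2 (Ordinal.le_iSup g p)
    refine ⟨(⨆ p, g p) + 1, fun _ => ⟨(h1 (0, 0)).trans_lt (hle _), ?_, fun i n h =>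
      ⟨g (i, n), h1 _, hle _, h3 _ h⟩⟩⟩
    exact hω.add_one_lt (Ordinal.iSup_lt_omega_one h2)
  choose f hf using next
  let s : ℕ → Ordinal.{0} := fun k => f^[k] δ
  have hs : ∀ k, s (k + 1) = f (s k) := fun k => Function.iterate_succ_apply' f k δ
  have hsω : ∀ k, s k < ω_ 1 := by
    intro k
    induction k with
    | zero => exact hδ
    | succ k ih =>
      rw [hs]
      exact (hf _ ih).2.1
  have hmono : ∀ k, s k < s (k + 1) := fun k => by
    rw [hs]
    exact (hf _ (hsω k)).1
  have hlt : ∀ k, s k < ⨆ k, s k := fun k => (hmono k).trans_le (Ordinal.le_iSup s (k + 1))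
  have hα : IsSuccLimit (⨆ k, s k) := by
    refine Ordinal.isSuccLimit_iff.2 ⟨(bot_le.trans_lt (hlt 0)).ne', ?_⟩
    refine isSuccPrelimit_of_succ_lt fun β hβ => ?_
    obtain ⟨k, hk⟩ := Ordinal.lt_iSup_iff.1 hβ
    exact (Order.succ_le_of_lt hk).trans_lt (hlt k)
  have hαω : ⨆ k, s k < ω_ 1 := Ordinal.iSup_lt_omega_one hsω
  refine ⟨⨆ k, s k, hlt 0, hαω, ?_⟩
  refine snap_eq_of_isSuccLimit hα ?_ ?_ fun i n => ?_
  · rw [snap_of_isSuccLimit hω]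
  · rw [snap_of_isSuccLimit hω]
  · constructor
    · intro h
      by_contra h'
      rw [hzero i n (by simpa using h') _ (hlt 0).le hαω] at h
      exact absurd h (by simp)
    · intro h
      rw [tape_of_isSuccLimit hα]
      intro β hβ
      obtain ⟨k, hk⟩ := Ordinal.lt_iSup_iff.1 hβ
      obtain ⟨γ, h1, h2, h3⟩ := (hf _ (hsω k)).2.2 i n h
      rw [← hs] at h2
      exact ⟨γ, hk.le.trans h1, h2.trans (hlt _), h3⟩

/-- Every computation either halts or starts looping at a countable stage. -/
theorem exists_haltedAt_or_loopsBetween (M : Machine) (x : R) :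
    (∃ α < ω_ 1, M.haltedAt x α) ∨ ∃ α β, β < ω_ 1 ∧ M.LoopsBetween x α β := by
  refine or_iff_not_imp_left.2 fun hno => ?_
  have hω : IsSuccLimit (ω_ 1 : Ordinal.{0}) := Cardinal.isSuccLimit_omega 1
  have hex : ∀ p : Fin 3 × ℕ, ∃ δ < ω_ 1, (M.snap x (ω_ 1)).tape p.1 p.2 = false →
      ∀ γ, δ ≤ γ → γ < ω_ 1 → (M.snap x γ).tape p.1 p.2 = false := by
    intro p
    by_cases hp : (M.snap x (ω_ 1)).tape p.1 p.2 = true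
    · exact ⟨0, hω.bot_lt, by simp [hp]⟩
    · have hp' := hp
      rw [tape_of_isSuccLimit hω] at hp'
      push Not at hp'
      obtain ⟨δ, hδ, h⟩ := hp'
      exact ⟨δ, hδ, fun _ γ h1 h2 => by simpa using h γ h1 h2⟩
  choose g hg hg' using hex
  have hzero : ∀ δ, ⨆ p, g p ≤ δ → ∀ i n, (M.snap x (ω_ 1)).tape i n = false →
      ∀ γ, δ ≤ γ → γ < ω_ 1 → (M.snap x γ).tape i n = false := fun δ hδ i n h γ h1 h2 =>
    hg' (i, n) h γ ((Ordinal.le_iSup g (i, n)).trans (hδ.trans h1)) h2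
  obtain ⟨α, h1, h2, h3⟩ := exists_snap_eq_snap_omega_one M x
    (Ordinal.iSup_lt_omega_one hg) (hzero _ le_rfl)
  obtain ⟨β, h4, h5, h6⟩ := exists_snap_eq_snap_omega_one M x h2 (hzero _ h1.le)
  refine ⟨α, β, h5, h4, ?_, ?_, h6.trans h3.symm, fun γ hαγ hγβ i n h => ?_, fun γ hγ h =>
    hno ⟨γ, hγ.trans h5, h⟩⟩
  · rw [h3, snap_of_isSuccLimit hω]
  · rw [h3, snap_of_isSuccLimit hω]
  · exact hzero _ h1.le i n (by rwa [h3] at h) γ hαγ (hγβ.trans h5)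

theorem haltsAt_unique {α β : Ordinal.{0}} (hα : M.haltsAt x α) (hβ : M.haltsAt x β) : α = β := by
  rcases lt_trichotomy α β with h | h | h
  · exact absurd hα.1 (hβ.2 α h)
  · exact h
  · exact absurd hβ.1 (hα.2 β h)

theorem exists_haltsAt_lt_omega_one (h : M.halts x) : ∃ α < ω_ 1, M.haltsAt x α := by
  obtain ⟨α, hα, hα'⟩ | ⟨α, β, -, hl⟩ := M.exists_haltedAt_or_loopsBetween x
  · obtain ⟨γ, hγ, hmin⟩ := WellFounded.has_min Ordinal.lt_wf {γ | M.haltedAt x γ} ⟨α, hα'⟩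
    exact ⟨γ, (not_lt.1 (hmin α hα')).trans_lt hα, hγ, fun β hβ h => hmin β h hβ⟩
  · exact absurd h hl.not_halts

end ITTM.Machine

namespace ITTM

open Order Ordinal

/-- Codes for runs of a machine along a countable ordinal: a relation on `ℕ` comparing the stages
named by natural numbers, followed by the states, head positions and tapes at these stages. -/
abbrev RunCode (Q : ℕ) : Type :=
  (ℕ → ℕ → Bool) × (ℕ → Fin (Q + 1)) × (ℕ → ℕ) × (ℕ → Fin 3 → ℕ → Bool)

namespace RunCode

variable {M : Machine} {x : R} {w : RunCode M.Q} {o : ℕ → Ordinal.{0}}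

/-- The stage named by `m` precedes the stage named by `n`. -/
def Lt {Q : ℕ} (w : RunCode Q) (m n : ℕ) : Prop := w.1 m n = true

/-- The snapshot at the stage named by `m`. -/
def snapshot {Q : ℕ} (w : RunCode Q) (m : ℕ) : Snapshot Q := ⟨w.2.1 m, w.2.2.1 m, w.2.2.2 m⟩

/-- The snapshots of `w` obey the rules of the computation of `M` on `x` along the relation
`w.Lt`, which is negatively transitive. -/
def LocallyCorrect (M : Machine) (x : R) (w : RunCode M.Q) : Prop :=
  (∀ k m n, w.Lt k n → w.Lt k m ∨ w.Lt m n) ∧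
  (∀ m, (∀ k, ¬ w.Lt k m) → w.snapshot m = M.init x) ∧
  (∀ k m, w.Lt k m → (∀ j, ¬ (w.Lt k j ∧ w.Lt j m)) →
    w.snapshot m = M.stepSnap (w.snapshot k)) ∧
  (∀ m, (∃ k, w.Lt k m) → (∀ k, w.Lt k m → ∃ j, w.Lt k j ∧ w.Lt j m) →
    w.2.1 m = M.limit ∧ w.2.2.1 m = 0 ∧ ∀ i n, w.2.2.2 m i n = true ↔
      ∀ k, w.Lt k m → ∃ j, ¬ w.Lt j k ∧ w.Lt j m ∧ w.2.2.2 j i n = true)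

/-- `w` codes an initial segment of the computation of `M` on `x`. -/
def Codes (M : Machine) (x : R) (w : RunCode M.Q) : Prop :=
  LocallyCorrect M x w ∧ ∀ f : ℕ → ℕ, ¬ ∀ n, w.Lt (f (n + 1)) (f n)

/-- `w` describes an initial segment of the computation of `M` on `x`, where the natural number
`m` names the stage `o m`. -/
structure Enumerates (M : Machine) (x : R) (w : RunCode M.Q) (o : ℕ → Ordinal.{0}) : Prop where
  lt_iff : ∀ m n, w.Lt m n ↔ o m < o n
  exists_eq : ∀ m, ∀ β < o m, ∃ k, o k = β
  snapshot_eq : ∀ m, w.snapshot m = M.snap x (o m)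

/-- The limit rule of `LocallyCorrect`, read off at a limit stage. -/
theorem forall_lt_limit_iff (hlt : ∀ m n, w.Lt m n ↔ o m < o n)
    (hex : ∀ m, ∀ β < o m, ∃ k, o k = β) {m : ℕ} {i : Fin 3} {n : ℕ}
    (hsnap : ∀ j, o j < o m → w.snapshot j = M.snap x (o j)) (hm : IsSuccLimit (o m)) :
    (∀ k, w.Lt k m → ∃ j, ¬ w.Lt j k ∧ w.Lt j m ∧ w.2.2.2 j i n = true) ↔
      (M.snap x (o m)).tape i n = true := by
  rw [Machine.tape_of_isSuccLimit hm]
  simp only [hlt, not_lt]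
  constructor
  · intro H β hβ
    obtain ⟨k, rfl⟩ := hex m β hβ
    obtain ⟨j, h1, h2, h3⟩ := H k hβ
    exact ⟨o j, h1, h2, by rw [← hsnap j h2]; exact h3⟩
  · intro H k hk
    obtain ⟨γ, h1, h2, h3⟩ := H (o k) hk
    obtain ⟨j, rfl⟩ := hex m γ h2
    exact ⟨j, h1, h2, by rw [← hsnap j h2] at h3; exact h3⟩

theorem Enumerates.codes (h : Enumerates M x w o) : Codes M x w := by
  refine ⟨⟨?_, ?_, ?_, ?_⟩, ?_⟩
  · intro k m n hkn
    simp only [h.lt_iff] at hkn ⊢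
    exact (lt_or_ge (o k) (o m)).imp_right fun hle => hle.trans_lt hkn
  · intro m hm
    simp only [h.lt_iff] at hm
    have : o m = 0 := by
      by_contra h0
      obtain ⟨k, hk⟩ := h.exists_eq m 0 (pos_iff_ne_zero.2 h0)
      exact hm k (hk ▸ pos_iff_ne_zero.2 h0)
    rw [h.snapshot_eq, this, Machine.snap_zero]
  · intro k m hkm hj
    simp only [h.lt_iff] at hkm hj
    have : o m = o k + 1 := by
      refine le_antisymm ?_ (Order.add_one_le_of_lt hkm)
      by_contra hlt
      obtain ⟨j, hj'⟩ := h.exists_eq m _ (not_le.1 hlt)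
      exact hj j ⟨hj' ▸ lt_add_one _, hj' ▸ not_le.1 hlt⟩
    rw [h.snapshot_eq, h.snapshot_eq, this, Machine.snap_add_one]
  · rintro m ⟨k, hk⟩ hj
    have hm : IsSuccLimit (o m) := by
      simp only [h.lt_iff] at hk hj
      refine Ordinal.isSuccLimit_iff.2 ⟨(bot_le.trans_lt hk).ne', ?_⟩
      refine isSuccPrelimit_of_succ_lt fun β hβ => ?_
      obtain ⟨l, rfl⟩ := h.exists_eq m β hβ
      obtain ⟨j, h1, h2⟩ := hj l hβ
      exact (Order.succ_le_of_lt h1).trans_lt h2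
    have hs := h.snapshot_eq m
    refine ⟨?_, ?_, fun i n => ?_⟩
    · rw [Machine.snap_of_isSuccLimit hm] at hs
      exact congrArg Snapshot.state hs
    · rw [Machine.snap_of_isSuccLimit hm] at hs
      exact congrArg Snapshot.head hs
    · rw [forall_lt_limit_iff h.lt_iff h.exists_eq (fun j _ => h.snapshot_eq j) hm, ← hs]
      rfl
  · intro f hf
    simp only [h.lt_iff] at hf
    exact (wellFounded_iff_isEmpty_descending_chain.1 Ordinal.lt_wf).false ⟨o ∘ f, hf⟩

theorem Codes.exists_enumerates (h : Codes M x w) : ∃ o, Enumerates M x w o := by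
  obtain ⟨⟨htrans, hzero, hsucc, hlim⟩, hwf⟩ := h
  have : IsWellFounded ℕ w.Lt :=
    ⟨wellFounded_iff_isEmpty_descending_chain.2 ⟨fun f => hwf f.1 f.2⟩⟩
  let o : ℕ → Ordinal.{0} := IsWellFounded.rank w.Lt
  have hlt : ∀ m n, w.Lt m n ↔ o m < o n := by
    refine fun m n => ⟨IsWellFounded.rank_lt_of_rel, fun hmn => ?_⟩
    by_contra hnot
    refine hmn.not_ge ?_
    simp only [o]
    rw [IsWellFounded.rank_eq w.Lt n]
    refine Ordinal.iSup_le fun k => Order.succ_le_of_lt (IsWellFounded.rank_lt_of_rel ?_)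
    exact (htrans k m n k.2).resolve_right hnot
  have hex : ∀ m, ∀ β < o m, ∃ k, o k = β := fun m β hβ =>
    IsWellFounded.mem_range_rank_of_le hβ.le
  refine ⟨o, hlt, hex, fun m => ?_⟩
  induction hm : o m using WellFoundedLT.induction generalizing m with
  | ind α ih =>
    subst hm
    rcases Ordinal.zero_or_succ_or_isSuccLimit (o m) with h0 | ⟨β, hβ⟩ | hl
    · rw [h0, Machine.snap_zero]
      refine hzero m fun k hk => ?_
      rw [hlt, h0] at hk
      exact not_lt_bot hk
    · rw [Order.succ_eq_add_one] at hβ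
      have hβm : β < o m := hβ ▸ lt_add_one β
      obtain ⟨k, rfl⟩ := hex m β hβm
      rw [← hβ, Machine.snap_add_one, ← ih _ hβm k rfl]
      refine hsucc k m ((hlt k m).2 hβm) fun j hj => ?_
      rw [hlt, hlt, ← hβ] at hj
      exact (Order.lt_add_one_iff.1 hj.2).not_gt hj.1
    · obtain ⟨k₀, hk₀⟩ := hex m 0 hl.bot_lt
      obtain ⟨h1, h2, h3⟩ := hlim m ⟨k₀, (hlt _ _).2 (hk₀ ▸ hl.bot_lt)⟩ fun k hk => by
        rw [hlt] at hk
        obtain ⟨j, hj⟩ := hex m _ (hl.succ_lt hk)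
        exact ⟨j, (hlt _ _).2 (hj ▸ Order.lt_succ _), (hlt _ _).2 (hj ▸ hl.succ_lt hk)⟩
      refine (Machine.snap_eq_of_isSuccLimit hl h1 h2 fun i n => ?_).symm
      rw [← forall_lt_limit_iff hlt hex (fun j hj => ih _ hj j rfl) hl]
      exact (h3 i n).symm

theorem countable_Iic_of_lt_omega_one {α : Ordinal.{0}} (hα : α < ω_ 1) :
    (Set.Iic α).Countable := by
  have h : α.card < Cardinal.aleph 1 := by
    rwa [← Cardinal.lt_ord, Cardinal.ord_aleph]
  rw [← Set.Iio_insert]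
  refine Set.Countable.insert _ ?_
  rw [← Cardinal.le_aleph0_iff_set_countable, Cardinal.mk_Iio_ordinal, Cardinal.lift_le_aleph0]
  simpa using h

/-- Every countable stage is named by some code of the computation. -/
theorem exists_enumerates (M : Machine) (x : R) {α : Ordinal.{0}} (hα : α < ω_ 1) :
    ∃ (w : RunCode M.Q) (o : ℕ → Ordinal.{0}),
      Enumerates M x w o ∧ ∀ β ≤ α, ∃ m, o m = β := by
  have : Countable (Set.Iic α) := countable_Iic_of_lt_omega_one hα
  obtain ⟨e, he⟩ := exists_surjective_nat (Set.Iic α)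
  have hsurj : ∀ β ≤ α, ∃ m, (e m : Ordinal) = β := fun β hβ =>
    (he ⟨β, hβ⟩).imp fun m hm => congrArg Subtype.val hm
  refine ⟨⟨fun m n => decide ((e m : Ordinal) < e n), fun m => (M.snap x (e m)).state,
    fun m => (M.snap x (e m)).head, fun m => (M.snap x (e m)).tape⟩, fun m => e m,
    ⟨fun m n => ?_, fun m β hβ => hsurj β (hβ.le.trans (e m).2), fun m => rfl⟩, hsurj⟩
  simp [Lt]

/-- The stage named by `m` is the first one in the halting state. -/
def HaltsAt (M : Machine) (w : RunCode M.Q) (m : ℕ) : Prop :=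
  w.2.1 m = M.halt ∧ ∀ k, w.Lt k m → ¬ w.2.1 k = M.halt

/-- The coded run visibly loops without having halted. -/
def Loops (M : Machine) (w : RunCode M.Q) : Prop :=
  ∃ a b, w.Lt a b ∧ w.2.1 a = M.limit ∧ w.2.2.1 a = 0 ∧
    (w.2.1 b = w.2.1 a ∧ w.2.2.1 b = w.2.2.1 a ∧ ∀ i n, w.2.2.2 b i n = w.2.2.2 a i n) ∧
    (∀ c, ¬ w.Lt c a → w.Lt c b → ∀ i n, w.2.2.2 a i n = false → w.2.2.2 c i n = false) ∧
    ∀ c, w.Lt c b → ¬ w.2.1 c = M.halt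

namespace Enumerates

theorem state_eq (h : Enumerates M x w o) (m : ℕ) : w.2.1 m = (M.snap x (o m)).state :=
  congrArg Snapshot.state (h.snapshot_eq m)

theorem head_eq (h : Enumerates M x w o) (m : ℕ) : w.2.2.1 m = (M.snap x (o m)).head :=
  congrArg Snapshot.head (h.snapshot_eq m)

theorem tape_eq (h : Enumerates M x w o) (m : ℕ) : w.2.2.2 m = (M.snap x (o m)).tape :=
  congrArg Snapshot.tape (h.snapshot_eq m)

theorem haltsAt_iff (h : Enumerates M x w o) (m : ℕ) :
    HaltsAt M w m ↔ M.haltsAt x (o m) := by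
  simp only [HaltsAt, Machine.haltsAt, Machine.haltedAt, h.state_eq, h.lt_iff]
  refine and_congr_right fun _ => ⟨fun H β hβ => ?_, fun H k hk => H _ hk⟩
  obtain ⟨k, rfl⟩ := h.exists_eq m β hβ
  exact H k hβ

theorem loops_iff (h : Enumerates M x w o) :
    Loops M w ↔ ∃ a b, M.LoopsBetween x (o a) (o b) := by
  simp only [Loops, h.state_eq, h.head_eq, h.tape_eq, h.lt_iff, not_lt]
  refine exists₂_congr fun a b => ⟨?_, fun H => ?_⟩
  · rintro ⟨h1, h2, h3, ⟨h4, h5, h6⟩, h7, h8⟩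
    refine ⟨h1, h2, h3, ?_, fun γ hγ hγ' => ?_, fun γ hγ => ?_⟩
    · rw [← h.snapshot_eq, ← h.snapshot_eq]
      simp only [snapshot, h.state_eq, h.head_eq, h.tape_eq, h4, h5, funext₂ h6]
    · obtain ⟨c, rfl⟩ := h.exists_eq b γ hγ'
      exact h7 c hγ hγ'
    · obtain ⟨c, rfl⟩ := h.exists_eq b γ hγ
      exact h8 c hγ
  · refine ⟨H.lt, H.state, H.head, ?_, fun c hc hc' => H.tape _ hc hc', fun c hc =>
      H.not_haltedAt _ hc⟩
    simp [H.snap_eq]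

end Enumerates

theorem exists_codes_haltsAt {α : Ordinal.{0}} (hα : M.haltsAt x α) :
    ∃ w, Codes M x w ∧ ∃ m, HaltsAt M w m ∧ w.2.2.2 m = (M.snap x α).tape := by
  obtain ⟨β, hβ, hβ'⟩ := Machine.exists_haltsAt_lt_omega_one ⟨α, hα.1⟩
  obtain rfl := Machine.haltsAt_unique hα hβ'
  obtain ⟨w, o, h, ho⟩ := exists_enumerates M x hβ
  obtain ⟨m, rfl⟩ := ho _ le_rfl
  exact ⟨w, h.codes, m, (h.haltsAt_iff m).2 hα, h.tape_eq m⟩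

theorem not_halts_iff : ¬ M.halts x ↔ ∃ w, Codes M x w ∧ Loops M w := by
  constructor
  · intro hno
    obtain ⟨α, -, hα⟩ | ⟨α, β, hβ, hl⟩ := M.exists_haltedAt_or_loopsBetween x
    · exact absurd ⟨α, hα⟩ hno
    · obtain ⟨w, o, h, ho⟩ := exists_enumerates M x hβ
      obtain ⟨a, rfl⟩ := ho α hl.lt.le
      obtain ⟨b, rfl⟩ := ho β le_rfl
      exact ⟨w, h.codes, h.loops_iff.2 ⟨a, b, hl⟩⟩
  · rintro ⟨w, hw, hl⟩
    obtain ⟨o, h⟩ := hw.exists_enumerates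
    obtain ⟨a, b, hab⟩ := h.loops_iff.1 hl
    exact hab.not_halts

theorem halts_iff : M.halts x ↔ ∃ w, Codes M x w ∧ ∃ m, HaltsAt M w m := by
  constructor
  · intro h
    obtain ⟨α, -, hα⟩ := Machine.exists_haltsAt_lt_omega_one h
    obtain ⟨w, hw, m, hm, -⟩ := exists_codes_haltsAt hα
    exact ⟨w, hw, m, hm⟩
  · rintro ⟨w, hw, m, hm⟩
    obtain ⟨o, h⟩ := hw.exists_enumerates
    exact ⟨o m, ((h.haltsAt_iff m).1 hm).1⟩

theorem outputs_iff {y : R} :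
    M.outputs x y ↔ ∃ w, Codes M x w ∧ ∃ m, HaltsAt M w m ∧ ∀ n, w.2.2.2 m 2 n = y n := by
  constructor
  · rintro ⟨α, hα, rfl⟩
    obtain ⟨w, hw, m, hm, ht⟩ := exists_codes_haltsAt hα
    exact ⟨w, hw, m, hm, by simp [ht]⟩
  · rintro ⟨w, hw, m, hm, hy⟩
    obtain ⟨o, h⟩ := hw.exists_enumerates
    exact ⟨o m, (h.haltsAt_iff m).1 hm, by rw [← h.tape_eq, funext hy]⟩

theorem not_outputs_iff {y : R} :
    ¬ M.outputs x y ↔ ∃ w, Codes M x w ∧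
      ((∃ m, HaltsAt M w m ∧ ¬ ∀ n, w.2.2.2 m 2 n = y n) ∨ Loops M w) := by
  constructor
  · intro hno
    by_cases hx : M.halts x
    · obtain ⟨α, -, hα⟩ := Machine.exists_haltsAt_lt_omega_one hx
      obtain ⟨w, hw, m, hm, ht⟩ := exists_codes_haltsAt hα
      exact ⟨w, hw, .inl ⟨m, hm, fun hy => hno ⟨α, hα, by rw [← ht, funext hy]⟩⟩⟩
    · obtain ⟨w, hw, hl⟩ := not_halts_iff.1 hx
      exact ⟨w, hw, .inr hl⟩
  · rintro ⟨w, hw, ⟨m, hm, hy⟩ | hl⟩ ⟨α, hα, rfl⟩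
    · obtain ⟨o, h⟩ := hw.exists_enumerates
      obtain rfl := Machine.haltsAt_unique hα ((h.haltsAt_iff m).1 hm)
      exact hy (by simp [h.tape_eq])
    · exact not_halts_iff.2 ⟨w, hw, hl⟩ ⟨α, hα.1⟩

section Measurability

open MeasureTheory

variable {X : Type} [MeasurableSpace X]

theorem measurable_lt {Q : ℕ} {w : X → RunCode Q} (hw : Measurable w) (m n : ℕ) :
    Measurable fun q => (w q).Lt m n := by
  unfold Lt
  exact measurableSet_setOfPred.1 (measurableSet_eq_fun (by fun_prop) measurable_const)

theorem measurable_eq_fun {Y : Type} [MeasurableSpace Y] [MeasurableEq Y] {f g : X → Y}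
    (hf : Measurable f) (hg : Measurable g) : Measurable fun q => f q = g q :=
  measurableSet_setOfPred.1 (measurableSet_eq_fun hf hg)

theorem snapshot_ext_iff {Q : ℕ} {s t : Snapshot Q} :
    s = t ↔ s.state = t.state ∧ s.head = t.head ∧ ∀ i n, s.tape i n = t.tape i n := by
  constructor
  · rintro rfl
    simp
  · obtain ⟨q, k, f⟩ := s
    obtain ⟨q', k', f'⟩ := t
    rintro ⟨h1, h2, h3⟩
    simp only at h1 h2 h3
    simp only [h1, h2, funext₂ h3]

theorem snapshot_eq_stepSnap_iff (M : Machine) (w : RunCode M.Q) (k m : ℕ) :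
    w.snapshot m = M.stepSnap (w.snapshot k) ↔
      ∀ (h : ℕ) (q : Fin (M.Q + 1)) (r : Fin 3 → Bool),
        w.2.2.1 k = h → w.2.1 k = q → (∀ i, w.2.2.2 k i h = r i) →
        w.2.1 m = (M.trans (q, r)).1 ∧
        w.2.2.1 m = (if (M.trans (q, r)).2.2 then h + 1 else h - 1) ∧
        ∀ i n, w.2.2.2 m i n = if n = h then (M.trans (q, r)).2.1 i else w.2.2.2 k i n := by
  rw [snapshot_ext_iff]
  constructor
  · rintro H h q r rfl rfl hr
    obtain rfl : (fun i => w.2.2.2 k i (w.2.2.1 k)) = r := funext hr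
    exact H
  · intro H
    exact H _ _ _ rfl rfl fun _ => rfl

theorem measurable_locallyCorrect (M : Machine) {x : X → R} {w : X → RunCode M.Q}
    (hx : Measurable x) (hw : Measurable w) :
    Measurable fun q => LocallyCorrect M (x q) (w q) := by
  have hlt := measurable_lt hw
  have hst : ∀ m, Measurable fun q => (w q).2.1 m := fun m => by fun_prop
  have hhd : ∀ m, Measurable fun q => (w q).2.2.1 m := fun m => by fun_prop
  have htp : ∀ m i n, Measurable fun q => (w q).2.2.2 m i n := fun m i n => by fun_prop
  have hxn : ∀ n, Measurable fun q => x q n := fun n => by fun_prop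
  have hc : ∀ {Y : Type} [MeasurableSpace Y] (y : Y), Measurable fun _ : X => y :=
    fun y => measurable_const
  unfold LocallyCorrect
  refine .and ?_ (.and ?_ (.and ?_ ?_))
  · exact .forall fun k => .forall fun m => .forall fun n =>
      (hlt k n).imp ((hlt k m).or (hlt m n))
  · refine .forall fun m => (Measurable.forall fun k => (hlt k m).not).imp ?_
    simp only [snapshot_ext_iff]
    refine .and (measurable_eq_fun (hst m) (hc _)) (.and (measurable_eq_fun (hhd m) (hc _))
      (.forall fun i => .forall fun n => measurable_eq_fun (htp m i n) ?_))
    by_cases hi : i = 0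
    · simpa [Machine.init, hi] using hxn n
    · simp [Machine.init, hi]
  · refine .forall fun k => .forall fun m => (hlt k m).imp
      ((Measurable.forall fun j => ((hlt k j).and (hlt j m)).not).imp ?_)
    simp only [snapshot_eq_stepSnap_iff]
    refine .forall fun h => .forall fun q => .forall fun r =>
      (measurable_eq_fun (hhd k) (hc _)).imp ((measurable_eq_fun (hst k) (hc _)).imp
      ((Measurable.forall fun i => measurable_eq_fun (htp k i h) (hc _)).imp
      ((measurable_eq_fun (hst m) (hc _)).and ((measurable_eq_fun (hhd m) (hc _)).and
      (.forall fun i => .forall fun n => measurable_eq_fun (htp m i n) ?_)))))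
    by_cases hn : n = h
    · simp [hn]
    · simpa [hn] using htp k i n
  · refine .forall fun m => (Measurable.exists fun k => hlt k m).imp
      ((Measurable.forall fun k => (hlt k m).imp
        (.exists fun j => (hlt k j).and (hlt j m))).imp ?_)
    exact .and (measurable_eq_fun (hst m) (hc _)) (.and (measurable_eq_fun (hhd m) (hc _))
      (.forall fun i => .forall fun n => (measurable_eq_fun (htp m i n) (hc _)).iff
        (.forall fun k => (hlt k m).imp (.exists fun j => (hlt j k).not.and ((hlt j m).and
          (measurable_eq_fun (htp j i n) (hc _)))))))

theorem measurable_haltsAt (M : Machine) {w : X → RunCode M.Q} (hw : Measurable w) (m : ℕ) :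
    Measurable fun q => HaltsAt M (w q) m := by
  have hst : ∀ m, Measurable fun q => (w q).2.1 m := fun m => by fun_prop
  exact .and (measurable_eq_fun (hst m) measurable_const) (.forall fun k =>
    (measurable_lt hw k m).imp (measurable_eq_fun (hst k) measurable_const).not)

theorem measurable_loops (M : Machine) {w : X → RunCode M.Q} (hw : Measurable w) :
    Measurable fun q => Loops M (w q) := by
  have hlt := measurable_lt hw
  have hst : ∀ m, Measurable fun q => (w q).2.1 m := fun m => by fun_prop
  have hhd : ∀ m, Measurable fun q => (w q).2.2.1 m := fun m => by fun_prop
  have htp : ∀ m i n, Measurable fun q => (w q).2.2.2 m i n := fun m i n => by fun_prop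
  have hc : ∀ {Y : Type} [MeasurableSpace Y] (y : Y), Measurable fun _ : X => y :=
    fun y => measurable_const
  exact .exists fun a => .exists fun b => (hlt a b).and
    ((measurable_eq_fun (hst a) (hc _)).and ((measurable_eq_fun (hhd a) (hc _)).and
    (((measurable_eq_fun (hst b) (hst a)).and ((measurable_eq_fun (hhd b) (hhd a)).and
      (.forall fun i => .forall fun n => measurable_eq_fun (htp b i n) (htp a i n)))).and
    ((Measurable.forall fun c => (hlt c a).not.imp ((hlt c b).imp (.forall fun i => .forall fun n =>
      (measurable_eq_fun (htp a i n) (hc _)).imp (measurable_eq_fun (htp c i n) (hc _))))).and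
    (.forall fun c => (hlt c b).imp (measurable_eq_fun (hst c) (hc _)).not)))))

theorem measurable_output_eq {Q : ℕ} {w : X → RunCode Q} {y : X → R} (hw : Measurable w)
    (hy : Measurable y) (m : ℕ) : Measurable fun q => ∀ n, (w q).2.2.2 m 2 n = y q n :=
  .forall fun n => measurable_eq_fun (by fun_prop) (by fun_prop)

end Measurability

end RunCode

section Projection

open MeasureTheory

instance polishSpace_pi {ι : Type} [Countable ι] {Y : ι → Type} [∀ i, TopologicalSpace (Y i)]
    [∀ i, PolishSpace (Y i)] : PolishSpace (∀ i, Y i) where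

instance polishSpace_prod {Y Z : Type} [TopologicalSpace Y] [TopologicalSpace Z] [PolishSpace Y]
    [PolishSpace Z] : PolishSpace (Y × Z) where

set_option synthInstance.maxHeartbeats 200000 in
set_option synthInstance.maxSize 2000 in
instance borelSpace_runCode (Q : ℕ) : BorelSpace (RunCode Q) := inferInstance

/-- Cantor space maps measurably onto every nonempty Polish space. -/
theorem exists_measurable_surjective (W : Type) [TopologicalSpace W] [PolishSpace W]
    [MeasurableSpace W] [BorelSpace W] [Nonempty W] :
    ∃ e : R → W, Measurable e ∧ Function.Surjective e := by
  obtain ⟨g, hg, hg'⟩ := PolishSpace.exists_nat_nat_continuous_surjective W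
  have e : R ≃ᵐ (ℕ → ℕ) := PolishSpace.measurableEquivOfNotCountable
    (not_countable_iff.2 (Cardinal.aleph0_lt_mk_iff.1 (by simp [Cardinal.aleph0_lt_continuum])))
    (not_countable_iff.2 (Cardinal.aleph0_lt_mk_iff.1 (by simp [Cardinal.aleph0_lt_continuum])))
  exact ⟨g ∘ e, hg.measurable.comp e.measurable, hg'.comp e.surjective⟩

variable {X : Type} [TopologicalSpace X] [PolishSpace X] [MeasurableSpace X] [BorelSpace X]

/-- A set defined by a Borel matrix preceded by `∃ w, ∀ f`, with `w` ranging over a Polish space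
and `f` over Baire space, is the projection along Cantor space of a coanalytic set. -/
theorem exists_coanalytic_of_exists_forall {W : Type} [TopologicalSpace W] [PolishSpace W]
    [MeasurableSpace W] [BorelSpace W] [Nonempty W] {D : X → W → (ℕ → ℕ) → Prop}
    (hD : Measurable fun p : X × W × (ℕ → ℕ) => D p.1 p.2.1 p.2.2) :
    ∃ C : Set (X × R), AnalyticSet Cᶜ ∧ ∀ q, (∃ w, ∀ f, D q w f) ↔ ∃ z, (q, z) ∈ C := by
  obtain ⟨e, he, hsurj⟩ := exists_measurable_surjective W
  refine ⟨{p | ∀ f, D p.1 (e p.2) f}, ?_, fun q => hsurj.exists⟩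
  have hB : MeasurableSet {p : X × R × (ℕ → ℕ) | ¬ D p.1 (e p.2.1) p.2.2} := by
    refine measurableSet_setOfPred.2 (Measurable.not (hD.comp (g := fun p : X × W × (ℕ → ℕ) =>
      D p.1 p.2.1 p.2.2) (f := fun p : X × R × (ℕ → ℕ) => (p.1, e p.2.1, p.2.2)) ?_))
    fun_prop
  convert hB.analyticSet.image_of_continuous
    (f := fun p : X × R × (ℕ → ℕ) => (p.1, p.2.1)) (by fun_prop)
  ext ⟨q, z⟩
  simp

theorem exists_coanalytic_of_exists_codes (M : Machine) {x : X → R} (hx : Measurable x)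
    {P : X → RunCode M.Q → Prop} (hP : Measurable fun p : X × RunCode M.Q => P p.1 p.2) :
    ∃ C : Set (X × R), AnalyticSet Cᶜ ∧
      ∀ q, (∃ w, RunCode.Codes M (x q) w ∧ P q w) ↔ ∃ z, (q, z) ∈ C := by
  have hD : Measurable fun p : X × RunCode M.Q × (ℕ → ℕ) =>
      (RunCode.LocallyCorrect M (x p.1) p.2.1 ∧ P p.1 p.2.1) ∧
        ¬ ∀ n, p.2.1.Lt (p.2.2 (n + 1)) (p.2.2 n) := by
    refine .and (.and (RunCode.measurable_locallyCorrect M (by fun_prop) (by fun_prop)) ?_)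
      (.not (.forall fun n => ?_))
    · exact hP.comp (g := fun p : X × RunCode M.Q => P p.1 p.2)
        (f := fun p : X × RunCode M.Q × (ℕ → ℕ) => (p.1, p.2.1)) (by fun_prop)
    · have : ∀ p : X × RunCode M.Q × (ℕ → ℕ), p.2.1.Lt (p.2.2 (n + 1)) (p.2.2 n) ↔
          ∃ a b, p.2.2 (n + 1) = a ∧ p.2.2 n = b ∧ p.2.1.Lt a b := by simp
      simp only [this]
      exact .exists fun a => .exists fun b =>
        .and (RunCode.measurable_eq_fun (by fun_prop) measurable_const)
        (.and (RunCode.measurable_eq_fun (by fun_prop) measurable_const)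
          (RunCode.measurable_lt (by fun_prop) a b))
  obtain ⟨C, hC, hmem⟩ := exists_coanalytic_of_exists_forall
    (D := fun q (w : RunCode M.Q) f => (RunCode.LocallyCorrect M (x q) w ∧ P q w) ∧
      ¬ ∀ n, w.Lt (f (n + 1)) (f n)) hD
  refine ⟨C, hC, fun q => ?_⟩
  rw [← hmem]
  refine exists_congr fun w => ?_
  rw [forall_and, forall_const, RunCode.Codes]
  tauto

end Projection

end ITTM

theorem isProjCoanalytic2_of_exists_codes (M : ITTM.Machine) {S : Set (ITTM.R × ITTM.R)}
    {P : ITTM.R × ITTM.R → ITTM.RunCode M.Q → Prop}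
    (hP : Measurable fun p : (ITTM.R × ITTM.R) × ITTM.RunCode M.Q => P p.1 p.2)
    (hS : ∀ q, q ∈ S ↔ ∃ w, ITTM.RunCode.Codes M q.1 w ∧ P q w) : IsProjCoanalytic2 S := by
  obtain ⟨C, hC, hmem⟩ := ITTM.exists_coanalytic_of_exists_codes M measurable_fst hP
  refine ⟨{p | ((p.1, p.2.1), p.2.2) ∈ C}, ?_, Set.ext fun q => (hS q).trans (hmem q)⟩
  convert hC.image_of_continuous
    (f := fun p : (ITTM.R × ITTM.R) × ITTM.R => (p.1.1, p.1.2, p.2)) (by fun_prop)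
  ext ⟨x, y, z⟩
  simp

theorem isProjCoanalytic1_of_exists_codes (M : ITTM.Machine) {A : Set ITTM.R}
    {P : ITTM.RunCode M.Q → Prop} (hP : Measurable P)
    (hA : ∀ x, x ∈ A ↔ ∃ w, ITTM.RunCode.Codes M x w ∧ P w) : IsProjCoanalytic1 A := by
  obtain ⟨C, hC, hmem⟩ := ITTM.exists_coanalytic_of_exists_codes M
    (measurable_id (α := ITTM.R)) (P := fun _ => P) (hP.comp measurable_snd)
  exact ⟨C, hC, Set.ext fun x => (hA x).trans (hmem x)⟩

/-- **Complexity Theorem.** The graph of every infinite time computable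
function is `Δ¹₂`: for every program, both the graph
`{(x,y) : φ_p(x) halts with output y}` and its complement are projections of
coanalytic sets. Consequently every infinite time semi-decidable set, and its
complement, is the projection of a coanalytic set. -/
theorem graph_is_Delta_1_2 :
    (∀ M : ITTM.Machine,
      IsProjCoanalytic2 {q : ITTM.R × ITTM.R | M.outputs q.1 q.2} ∧
      IsProjCoanalytic2 {q : ITTM.R × ITTM.R | M.outputs q.1 q.2}ᶜ) ∧
    (∀ A : Set ITTM.R, ITTM.ITTMSemiDecidable A →
      IsProjCoanalytic1 A ∧ IsProjCoanalytic1 Aᶜ) := by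
  open ITTM RunCode in
  refine ⟨fun M => ⟨?_, ?_⟩, ?_⟩
  · refine isProjCoanalytic2_of_exists_codes M (P := fun q w =>
      ∃ m, HaltsAt M w m ∧ ∀ n, w.2.2.2 m 2 n = q.2 n) ?_ fun q => outputs_iff
    exact .exists fun m => (measurable_haltsAt M measurable_snd m).and
      (measurable_output_eq measurable_snd (by fun_prop) m)
  · refine isProjCoanalytic2_of_exists_codes M (P := fun q w =>
      (∃ m, HaltsAt M w m ∧ ¬ ∀ n, w.2.2.2 m 2 n = q.2 n) ∨ Loops M w) ?_
      fun q => not_outputs_iff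
    exact .or (.exists fun m => (measurable_haltsAt M measurable_snd m).and
      (measurable_output_eq measurable_snd (by fun_prop) m).not)
      (measurable_loops M measurable_snd)
  · rintro A ⟨M, rfl⟩
    exact ⟨isProjCoanalytic1_of_exists_codes M
        (.exists fun m => measurable_haltsAt M measurable_id m) fun x => halts_iff,
      isProjCoanalytic1_of_exists_codes M (measurable_loops M measurable_id)
        fun x => not_halts_iff⟩
end
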